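/- arXiv:2007.14115 — 2 statements merged into one kernel-verified Lean document; each statement's English description precedes it below -/
import Mathlib

section
/- Let G be an abelian group of finite order v, let p be a prime dividing v with v ≠ p, and suppose the Sylow p-subgroup of G is cyclic. Then G contains no nontrivial regular partial difference set; that is, for any parameters (v,k,λ,μ), every regular (v,k,λ,μ)-partial difference set D in G is trivial. -/
/-- `D` is a `(v,k,λ,μ)` partial difference set in the group `G` (written
multiplicatively): `|G| = v`, `|D| = k`, every non-identity element of `D` is represented
exactly `lam` times as `g * h⁻¹` with `g, h ∈ D`, `g ≠ h`, and every non-identity element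
of `G` not in `D` exactly `mu` times. -/
def IsPDS {G : Type*} [Group G] (D : Set G) (v k lam mu : ℕ) : Prop :=
  Nat.card G = v ∧ D.ncard = k ∧
  (∀ z : G, z ≠ 1 → z ∈ D →
    {p : G × G | p.1 ∈ D ∧ p.2 ∈ D ∧ p.1 ≠ p.2 ∧ p.1 * p.2⁻¹ = z}.ncard = lam) ∧
  (∀ z : G, z ≠ 1 → z ∉ D →
    {p : G × G | p.1 ∈ D ∧ p.2 ∈ D ∧ p.1 ≠ p.2 ∧ p.1 * p.2⁻¹ = z}.ncard = mu)

/-- `D` is regular: it avoids the identity and is closed under inversion. -/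
def IsRegularPDS {G : Type*} [Group G] (D : Set G) : Prop :=
  (1 : G) ∉ D ∧ ∀ g ∈ D, g⁻¹ ∈ D

/-- `D` is a trivial PDS: `D ∪ {1}` or `G \ D` is a subgroup of `G`. -/
def IsTrivialPDS {G : Type*} [Group G] (D : Set G) : Prop :=
  (∃ H : Subgroup G, D ∪ {1} = (H : Set G)) ∨ ∃ H : Subgroup G, Dᶜ = (H : Set G)

/-!
Let `K` be the kernel of `x ↦ x ^ p`, which has order `p` because the Sylow `p`-subgroup is
cyclic. In the group ring over `ZMod p` the powers of `D = ∑ g ∈ D, g` stay in the span of `D`, `1`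
and `G`, so `D ^ p = a • D + b • 1 + c • G`. By Frobenius, the coefficient of `D ^ p` at `x` counts
the `g ∈ D` with `g ^ p = x`, so it vanishes where `x` is not a `p`-th power. If both `D` and its
complement contain such an `x ≠ 1`, this forces `a = c = 0`, hence `p` divides the number of
elements of `D` in each fibre of `x ↦ x ^ p` other than `K`. The fibres have `p` elements, so away
from `K` the set `D` is a union of cosets of `K`.

Let `D' = G \ (D ∪ {1})`. If neither `D` nor `D'` lies in `K` or avoids `K`, both parameters of `D`
are at least `#(D \ K) > #(D ∩ K)`, and double counting then gives `#D' < #D`; by symmetry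
`#D < #D'`, a contradiction. In the remaining cases, `D` or `D'` lying in a proper subgroup or
avoiding `K`, the partial difference set is trivial.
-/

open Finset
open scoped Pointwise

section CosetsOff

variable {G : Type*} [Group G]

/-- Outside the subgroup `K`, the set `D` is a union of left cosets of `K`. -/
def IsUnionOfCosetsOff (D : Finset G) (K : Subgroup G) : Prop :=
  ∀ y ∉ K, ∀ u ∈ K, y * u ∈ D ↔ y ∈ D

namespace IsUnionOfCosetsOff

variable {D : Finset G} {K : Subgroup G}

lemma compl [Fintype G] [DecidableEq G] (hK : IsUnionOfCosetsOff D K) :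
    IsUnionOfCosetsOff (insert 1 D)ᶜ K := by
  intro y hy u hu
  have hyu : y * u ∉ K := by rwa [K.mul_mem_cancel_right hu]
  have hne : ∀ {g}, g ∉ K → g ≠ 1 := fun hg hg1 => hg (hg1 ▸ K.one_mem)
  simp [hne hy, hne hyu, hK y hy u hu]

lemma card_filter_mem_lt_card_filter_notMem [DecidablePred (· ∈ K)] (hK : IsUnionOfCosetsOff D K)
    (hone : 1 ∉ D) {d : G} (hd : d ∈ D) (hdK : d ∉ K) :
    #{g ∈ D | g ∈ K} < #{g ∈ D | g ∉ K} := by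
  classical
  rw [← Nat.add_one_le_iff, ← card_insert_of_notMem (a := 1) (by simp [hone])]
  refine card_le_card_of_injOn (d * ·) (fun u hu => ?_) (mul_right_injective d).injOn
  have huK : u ∈ K := by
    rcases mem_insert.1 hu with rfl | hu
    · exact K.one_mem
    · exact (mem_filter.1 hu).2
  simp [hK d hdK u huK, hd, K.mul_mem_cancel_right huK, hdK]

end IsUnionOfCosetsOff

lemma isUnionOfCosetsOff_ker [Finite G] {M : Type*} [Group M] [DecidableEq M] {D : Finset G}
    {f : G →* M} (hdvd : ∀ x ≠ 1, Nat.card f.ker ∣ #{g ∈ D | f g = x}) :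
    IsUnionOfCosetsOff D f.ker := by
  cases nonempty_fintype G
  have hmul : ∀ y ∉ f.ker, y ∈ D → ∀ u ∈ f.ker, y * u ∈ D := by
    intro y hy hyD u hu
    have hcard : #{g | f g = f y} = Nat.card f.ker := by
      rw [MonoidHom.card_fiber_eq_of_mem_range f ⟨y, rfl⟩ (one_mem f.range), ← Fintype.card_subtype,
        ← Nat.card_eq_fintype_card]
      rfl
    have hle : #{g | f g = f y} ≤ #{g ∈ D | f g = f y} :=
      hcard ▸ Nat.le_of_dvd (card_pos.2 ⟨y, by simp [hyD]⟩) (hdvd _ hy)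
    have hfiber := eq_of_subset_of_card_le (filter_subset_filter _ (subset_univ D)) hle
    have hyu : y * u ∈ ({g | f g = f y} : Finset G) := by simp [f.mem_ker.1 hu]
    exact (mem_filter.1 (hfiber ▸ hyu)).1
  refine fun y hy u hu => ⟨fun hyu => ?_, fun hyD => hmul y hy hyD u hu⟩
  have hyuK : y * u ∉ f.ker := by rwa [f.ker.mul_mem_cancel_right hu]
  simpa using hmul (y * u) hyuK hyu u⁻¹ (inv_mem hu)

end CosetsOff

section Group

variable {G : Type*} [Group G] [DecidableEq G]

/-- A regular partial difference set with parameters `lam` and `mu`, in counting form: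
`#(D ∩ x • D)` is the number of pairs `(g, h)` in `D × D` with `g * h⁻¹ = x`. The parameters are
integers so that those of the complement need no truncated subtraction. -/
structure IsRegularPDSWith (D : Finset G) (lam mu : ℤ) : Prop where
  one_notMem : 1 ∉ D
  inv_eq : D⁻¹ = D
  card_inter_smul : ∀ x ≠ 1, (#(D ∩ x • D) : ℤ) = if x ∈ D then lam else mu

lemma IsPDS.isRegularPDSWith {D : Finset G} {v k lam mu : ℕ} (hD : IsPDS (D : Set G) v k lam mu)
    (hreg : IsRegularPDS (D : Set G)) : IsRegularPDSWith D lam mu := by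
  obtain ⟨-, -, hlam, hmu⟩ := hD
  have hcount : ∀ x ≠ 1, {q : G × G | q.1 ∈ (D : Set G) ∧ q.2 ∈ (D : Set G) ∧ q.1 ≠ q.2 ∧
      q.1 * q.2⁻¹ = x}.ncard = #(D ∩ x • D) := by
    intro x hx
    have : {q : G × G | q.1 ∈ (D : Set G) ∧ q.2 ∈ (D : Set G) ∧ q.1 ≠ q.2 ∧ q.1 * q.2⁻¹ = x} =
        ({q ∈ D ×ˢ D | q.1 * q.2⁻¹ = x} : Finset (G × G)) := by
      ext ⟨g, h⟩
      suffices g * h⁻¹ = x → g ≠ h by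
        simp only [Set.mem_ofPred_eq, coe_filter, mem_product, mem_coe]
        tauto
      rintro rfl rfl
      exact hx (mul_inv_cancel g)
    rw [this, Set.ncard_coe_finset, card_mul_inv_eq_convolution_inv, card_inter_smul]
  refine ⟨hreg.1, ?_, fun x hx => ?_⟩
  · ext g
    rw [mem_inv']
    exact ⟨fun hg => by simpa using hreg.2 _ hg, hreg.2 g⟩
  · rw [← hcount x hx]
    split_ifs with hxD
    · exact_mod_cast hlam x hx hxD
    · exact_mod_cast hmu x hx hxD

namespace IsRegularPDSWith

variable {D : Finset G} {lam mu : ℤ}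

lemma inv_mem_iff (h : IsRegularPDSWith D lam mu) {g : G} : g⁻¹ ∈ D ↔ g ∈ D := by
  rw [← mem_inv', h.inv_eq]

lemma convolution_self (h : IsRegularPDSWith D lam mu) (x : G) :
    D.convolution D x = #(D ∩ x • D) := by
  rw [← card_inter_smul_inv, h.inv_eq]

lemma isTrivialPDS_of_mu_eq_zero (h : IsRegularPDSWith D lam 0) : IsTrivialPDS (D : Set G) := by
  have hmul : ∀ a ∈ D, ∀ b ∈ D, a * b = 1 ∨ a * b ∈ D := by
    intro a ha b hb
    by_contra! hab
    have hempty := h.card_inter_smul _ hab.1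
    rw [if_neg hab.2, Nat.cast_eq_zero, card_eq_zero] at hempty
    refine notMem_empty a (hempty ▸ mem_inter.2 ⟨ha, mem_smul_finset.2 ⟨b⁻¹, ?_, ?_⟩⟩)
    · exact h.inv_mem_iff.2 hb
    · simp
  refine .inl ⟨{ carrier := D ∪ {1}, mul_mem' := ?_, one_mem' := by simp, inv_mem' := ?_ }, rfl⟩
  · rintro a b (ha | rfl) (hb | rfl)
    · simpa using hmul a ha b hb
    all_goals simp_all
  · simp [h.inv_mem_iff]

lemma isTrivialPDS_of_card_le_mu (h : IsRegularPDSWith D lam mu) (hmu : #D ≤ mu) :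
    IsTrivialPDS (D : Set G) := by
  have hsmul : ∀ x ∉ D, ∀ g ∈ D, x⁻¹ * g ∈ D := by
    intro x hx g hg
    rcases eq_or_ne x 1 with rfl | hx1
    · simpa using hg
    have hcard := h.card_inter_smul x hx1
    rw [if_neg hx] at hcard
    have hinter : D ∩ x • D = D := eq_of_subset_of_card_le inter_subset_left (by omega)
    rw [← hinter, mem_inter, ← inv_smul_mem_iff] at hg
    exact hg.2
  refine .inr ⟨{ carrier := (D : Set G)ᶜ, mul_mem' := ?_, one_mem' := ?_, inv_mem' := ?_ }, rfl⟩
  · intro a b ha hb hab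
    exact hb (by simpa using hsmul a ha _ hab)
  · exact h.one_notMem
  · simp [h.inv_mem_iff]

lemma isTrivialPDS_of_subset_subgroup (h : IsRegularPDSWith D lam mu) {H : Subgroup G}
    (hH : H ≠ ⊤) (hDH : ∀ g ∈ D, g ∈ H) : IsTrivialPDS (D : Set G) := by
  obtain ⟨x, hx⟩ : ∃ x, x ∉ H := by simpa [Subgroup.eq_top_iff'] using hH
  have hx1 : x ≠ 1 := fun hx1 => hx (hx1 ▸ H.one_mem)
  have hinter : D ∩ x • D = ∅ := by
    refine eq_empty_of_forall_notMem fun g hg => hx ?_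
    rw [mem_inter, ← inv_smul_mem_iff, smul_eq_mul] at hg
    simpa using H.mul_mem (hDH g hg.1) (H.inv_mem (hDH _ hg.2))
  have hmu : mu = 0 := by
    simpa [hinter, mt (hDH x) hx] using (h.card_inter_smul x hx1).symm
  exact (hmu ▸ h).isTrivialPDS_of_mu_eq_zero

lemma card_inter_smul_insert_one (h : IsRegularPDSWith D lam mu) {x : G} (hx : x ≠ 1) :
    #(insert 1 D ∩ x • insert 1 D) = #(D ∩ x • D) + if x ∈ D then 2 else 0 := by
  have hone : (1 : G) ∈ x • D ↔ x ∈ D := by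
    rw [← inv_smul_mem_iff, smul_eq_mul, mul_one, h.inv_mem_iff]
  have hxD : x ∉ x • D := by
    simpa [← inv_smul_mem_iff] using h.one_notMem
  rw [smul_finset_insert, smul_eq_mul, mul_one]
  split_ifs with hmem
  · have : insert 1 D ∩ insert x (x • D) = insert 1 (insert x (D ∩ x • D)) := by
      ext g
      simp only [mem_inter, mem_insert]
      grind
    rw [this, card_insert_of_notMem, card_insert_of_notMem] <;> simp [hxD, h.one_notMem, hx.symm]
  · congr 1
    ext g
    simp only [mem_inter, mem_insert]
    grind

section Complement

variable [Fintype G]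

lemma compl (h : IsRegularPDSWith D lam mu) :
    IsRegularPDSWith (insert 1 D)ᶜ (Fintype.card G - 2 * #D - 2 + mu)
      (Fintype.card G - 2 * #D + lam) where
  one_notMem := by simp
  inv_eq := by
    ext g
    simp [mem_inv', h.inv_mem_iff]
  card_inter_smul x hx := by
    have hcompl : (insert 1 D)ᶜ ∩ x • (insert 1 D)ᶜ = (insert 1 D ∪ x • insert 1 D)ᶜ := by
      rw [compl_union, compl_eq_univ_sdiff (insert 1 D), smul_finset_sdiff, smul_finset_univ,
        ← compl_eq_univ_sdiff, ← compl_eq_univ_sdiff]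
    have hunion := card_union_add_card_inter (insert 1 D) (x • insert 1 D)
    rw [h.card_inter_smul_insert_one hx, card_smul_finset, card_insert_of_notMem h.one_notMem]
      at hunion
    have htotal := card_add_card_compl (insert 1 D ∪ x • insert 1 D)
    have hcount := h.card_inter_smul x hx
    rw [hcompl]
    by_cases hxD : x ∈ D <;> simp only [hxD, hx, mem_compl, mem_insert] at * <;> grind

lemma card_mul_card_sub (h : IsRegularPDSWith D lam mu) :
    (#D * (#D - 1 - lam) : ℤ) = #(insert 1 D)ᶜ * mu := by
  have hpairs : #D * #D = ∑ x : G, #(D ∩ x • D) := by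
    rw [← card_product,
      card_eq_sum_card_fiberwise (f := fun q : G × G => q.1 * q.2) (t := univ) (by simp)]
    exact sum_congr rfl fun x _ => h.convolution_self x
  have hmem : ∑ x ∈ D, (#(D ∩ x • D) : ℤ) = #D * lam := by
    refine (sum_congr rfl fun x hx => ?_).trans (sum_const lam |>.trans (nsmul_eq_mul _ _))
    rw [h.card_inter_smul x (ne_of_mem_of_not_mem hx h.one_notMem), if_pos hx]
  have hnotMem : ∑ x ∈ (insert 1 D)ᶜ, (#(D ∩ x • D) : ℤ) = #(insert 1 D)ᶜ * mu := by
    refine (sum_congr rfl fun x hx => ?_).trans (sum_const mu |>.trans (nsmul_eq_mul _ _))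
    rw [mem_compl, mem_insert, not_or] at hx
    rw [h.card_inter_smul x hx.1, if_neg hx.2]
  have hsum : (#D * #D : ℤ) = #D + #D * lam + #(insert 1 D)ᶜ * mu := by
    rw [← hmem, ← hnotMem, ← Nat.cast_mul, hpairs, ← sum_add_sum_compl (insert 1 D),
      sum_insert h.one_notMem]
    simp
  linear_combination hsum

lemma compl_insert_one_compl_insert_one (h : IsRegularPDSWith D lam mu) :
    (insert 1 (insert 1 D)ᶜ)ᶜ = D := by
  ext g
  have := h.one_notMem
  simp only [mem_compl, mem_insert]
  grind

lemma isTrivialPDS_of_compl (h : IsRegularPDSWith D lam mu)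
    (hcompl : IsTrivialPDS (↑(insert 1 D)ᶜ : Set G)) : IsTrivialPDS (D : Set G) := by
  have hone := h.one_notMem
  rcases hcompl with ⟨H, hH⟩ | ⟨H, hH⟩
  · refine .inr ⟨H, hH ▸ ?_⟩
    ext g
    simp only [Set.mem_compl_iff, Set.mem_union, Set.mem_singleton_iff, mem_coe, mem_compl,
      mem_insert]
    grind
  · refine .inl ⟨H, hH ▸ ?_⟩
    ext g
    simp only [Set.mem_compl_iff, Set.mem_union, Set.mem_singleton_iff, mem_coe, mem_compl,
      mem_insert]
    tauto

end Complement

end IsRegularPDSWith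

namespace IsRegularPDSWith

variable {D : Finset G} {lam mu : ℤ} {K : Subgroup G}

lemma card_filter_notMem_le_card_inter_smul [DecidablePred (· ∈ K)]
    (h : IsRegularPDSWith D lam mu) (hK : IsUnionOfCosetsOff D K) {u : G} (hu : u ∈ K) :
    #{g ∈ D | g ∉ K} ≤ #(D ∩ u • D) := by
  refine card_le_card fun g hg => ?_
  rw [mem_filter] at hg
  rw [mem_inter, ← inv_smul_mem_iff, smul_eq_mul, ← h.inv_mem_iff (g := u⁻¹ * g),
    mul_inv_rev, inv_inv, hK g⁻¹ (by simpa using hg.2) u hu, h.inv_mem_iff]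
  exact ⟨hg.1, hg.1⟩

/-- Both parameters are at least `#(D \ K)`, which exceeds `#(D ∩ K)`. -/
lemma card_compl_lt [Fintype G] (h : IsRegularPDSWith D lam mu) (hK : IsUnionOfCosetsOff D K)
    {u w d : G} (hu : u ∈ K) (huD : u ∈ D) (hw : w ∈ K) (hw1 : w ≠ 1) (hwD : w ∉ D) (hd : d ∈ D)
    (hdK : d ∉ K) : #(insert 1 D)ᶜ < #D := by
  classical
  have hlam : (#{g ∈ D | g ∉ K} : ℤ) ≤ lam := by
    have := h.card_inter_smul u (ne_of_mem_of_not_mem huD h.one_notMem)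
    rw [if_pos huD] at this
    exact this ▸ mod_cast h.card_filter_notMem_le_card_inter_smul hK hu
  have hmu : (#{g ∈ D | g ∉ K} : ℤ) ≤ mu := by
    have := h.card_inter_smul w hw1
    rw [if_neg hwD] at this
    exact this ▸ mod_cast h.card_filter_notMem_le_card_inter_smul hK hw
  have hlt := hK.card_filter_mem_lt_card_filter_notMem h.one_notMem hd hdK
  have hsplit := card_filter_add_card_filter_not (s := D) (· ∈ K)
  set A := #{g ∈ D | g ∉ K}
  have hA : 0 < (A : ℤ) := by omega
  have hD : 0 < (#D : ℤ) := by omega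
  have hlt' : (A * #(insert 1 D)ᶜ : ℤ) < A * #D := calc
    (A * #(insert 1 D)ᶜ : ℤ) ≤ #(insert 1 D)ᶜ * mu := by
      rw [mul_comm]
      gcongr
    _ = #D * (#D - 1 - lam) := h.card_mul_card_sub.symm
    _ < #D * A := by
      gcongr
      omega
    _ = A * #D := mul_comm _ _
  exact_mod_cast lt_of_mul_lt_mul_left hlt' hA.le

lemma isTrivialPDS_of_isUnionOfCosetsOff_of_notMem (h : IsRegularPDSWith D lam mu)
    (hK : IsUnionOfCosetsOff D K) (hbot : K ≠ ⊥) (hKD : ∀ u ∈ K, u ∉ D) :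
    IsTrivialPDS (D : Set G) := by
  classical
  obtain ⟨z, hz, hz1⟩ := K.bot_or_exists_ne_one.resolve_left hbot
  have hfilter : {g ∈ D | g ∉ K} = D := filter_true_of_mem fun g hg hgK => hKD g hgK hg
  have hle := h.card_filter_notMem_le_card_inter_smul hK hz
  have hmu := h.card_inter_smul z hz1
  rw [if_neg (hKD z hz)] at hmu
  refine h.isTrivialPDS_of_card_le_mu (hmu ▸ ?_)
  rw [hfilter] at hle
  exact_mod_cast hle

theorem isTrivialPDS_of_isUnionOfCosetsOff [Finite G] (h : IsRegularPDSWith D lam mu)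
    (hK : IsUnionOfCosetsOff D K) (hbot : K ≠ ⊥) (htop : K ≠ ⊤) : IsTrivialPDS (D : Set G) := by
  cases nonempty_fintype G
  by_cases hKD : ∀ u ∈ K, u ∉ D
  · exact h.isTrivialPDS_of_isUnionOfCosetsOff_of_notMem hK hbot hKD
  by_cases hKD' : ∀ u ∈ K, u ∉ (insert 1 D)ᶜ
  · exact h.isTrivialPDS_of_compl
      (h.compl.isTrivialPDS_of_isUnionOfCosetsOff_of_notMem hK.compl hbot hKD')
  by_cases hDK : ∀ d ∈ D, d ∈ K
  · exact h.isTrivialPDS_of_subset_subgroup htop hDK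
  by_cases hDK' : ∀ d ∈ (insert 1 D)ᶜ, d ∈ K
  · exact h.isTrivialPDS_of_compl (h.compl.isTrivialPDS_of_subset_subgroup htop hDK')
  push Not at hKD hKD' hDK hDK'
  obtain ⟨u, hu, huD⟩ := hKD
  obtain ⟨w, hw, hwD⟩ := hKD'
  obtain ⟨d, hd, hdK⟩ := hDK
  obtain ⟨e, he, heK⟩ := hDK'
  have hw' : w ≠ 1 ∧ w ∉ D := by simpa using hwD
  have hlt := h.card_compl_lt hK hu huD hw hw'.1 hw'.2 hd hdK
  have hgt := h.compl.card_compl_lt hK.compl hw hwD hu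
    (ne_of_mem_of_not_mem huD h.one_notMem) (by simp [huD]) he heK
  rw [h.compl_insert_one_compl_insert_one] at hgt
  exact absurd hlt hgt.not_gt

end IsRegularPDSWith

end Group

section MonoidAlgebra

open MonoidAlgebra

section Semiring

variable (R : Type*) [Semiring R] {G : Type*} [Monoid G]

/-- The group ring element `∑ g ∈ D, g`, by which partial difference sets are expressed as
solutions of a quadratic equation. -/
noncomputable def groupRingSum (D : Finset G) : MonoidAlgebra R G := ∑ g ∈ D, of R G g

lemma coeff_groupRingSum [DecidableEq G] (D : Finset G) (x : G) :
    (groupRingSum R D).coeff x = if x ∈ D then 1 else 0 := by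
  simp [groupRingSum, coeff_sum, Finsupp.single_apply]

end Semiring

lemma coeff_groupRingSum_pow_char (R : Type*) [CommSemiring R] {G : Type*} [CommMonoid G]
    [DecidableEq G] (p : ℕ) [Fact p.Prime] [CharP R p] (D : Finset G) (x : G) :
    (groupRingSum R D ^ p).coeff x = #{g ∈ D | g ^ p = x} := by
  have : CharP (MonoidAlgebra R G) p :=
    charP_of_injective_ringHom (f := singleOneRingHom (R := R) (M := G))
      single_right_injective p
  simp [groupRingSum, sum_pow_char, single_pow, coeff_sum, Finsupp.single_apply]

section QuadraticEquation

variable (R : Type*) {G : Type*} [Group G]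

lemma coeff_groupRingSum_mul [Semiring R] [DecidableEq G] (A B : Finset G) (x : G) :
    (groupRingSum R A * groupRingSum R B).coeff x = A.convolution B x := by
  simp [groupRingSum, sum_mul_sum, single_mul_single, coeff_sum, Finsupp.single_apply,
    ← sum_product', ← card_mul_eq]

lemma groupRingSum_univ_mul [Semiring R] [Fintype G] (D : Finset G) :
    groupRingSum R univ * groupRingSum R D = (#D : R) • groupRingSum R univ := by
  classical
  ext x
  simp [coeff_groupRingSum_mul, coeff_groupRingSum]

namespace IsRegularPDSWith

variable [CommRing R] [DecidableEq G] [Fintype G] {D : Finset G} {lam mu : ℤ}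

lemma groupRingSum_mul_self (h : IsRegularPDSWith D lam mu) :
    groupRingSum R D * groupRingSum R D = (lam - mu : R) • groupRingSum R D +
      (#D - mu : R) • 1 + (mu : R) • groupRingSum R univ := by
  ext x
  rw [coeff_groupRingSum_mul, h.convolution_self]
  simp only [coeff_add, coeff_smul, Finsupp.add_apply, Finsupp.smul_apply, coeff_groupRingSum,
    one_def, coeff_single, Finsupp.single_apply, mem_univ, smul_eq_mul]
  rcases eq_or_ne x 1 with rfl | hx
  · simp [h.one_notMem]
  · have hcount := congrArg (Int.cast : ℤ → R) (h.card_inter_smul x hx)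
    by_cases hxD : x ∈ D <;> simpa [hxD, hx.symm] using hcount

lemma exists_groupRingSum_pow_eq (h : IsRegularPDSWith D lam mu) (n : ℕ) :
    ∃ a b c : R, groupRingSum R D ^ n =
      a • groupRingSum R D + b • 1 + c • groupRingSum R univ := by
  induction n with
  | zero => exact ⟨0, 1, 0, by simp⟩
  | succ n ih =>
    obtain ⟨a, b, c, habc⟩ := ih
    refine ⟨a * (lam - mu) + b, a * (#D - mu), a * mu + c * #D, ?_⟩
    rw [pow_succ, habc, add_mul, add_mul, smul_mul_assoc, smul_mul_assoc, smul_mul_assoc,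
      h.groupRingSum_mul_self R, groupRingSum_univ_mul R, one_mul]
    module

end IsRegularPDSWith

end QuadraticEquation

end MonoidAlgebra

section PowerMap

variable {G : Type*} [CommGroup G] {p : ℕ} [Fact p.Prime]

lemma card_ker_powMonoidHom_of_isCyclic_sylow [Finite G] (hcyc : ∀ P : Sylow p G, IsCyclic P)
    (hpG : p ∣ Nat.card G) : Nat.card (powMonoidHom p : G →* G).ker = p := by
  set K := (powMonoidHom p : G →* G).ker
  have hpow : ∀ u : K, u ^ p = 1 := fun u => Subtype.ext u.2
  have hK : IsPGroup p K := fun u => ⟨1, by rw [pow_one, hpow]⟩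
  obtain ⟨P, hKP⟩ := hK.exists_le_sylow
  have := hcyc P
  have hKcyc : IsCyclic K := isCyclic_of_injective _ (Subgroup.inclusion_injective hKP)
  refine Nat.dvd_antisymm ?_ ?_
  · exact IsCyclic.exponent_eq_card (α := K) ▸ Monoid.exponent_dvd_of_forall_pow_eq_one hpow
  · obtain ⟨z, hz⟩ := exists_prime_orderOf_dvd_card' p hpG
    have hzK : z ∈ K := by simp [K, ← hz, pow_orderOf_eq_one]
    rw [← hz, ← Subgroup.orderOf_mk z hzK]
    exact orderOf_dvd_natCard _

namespace IsRegularPDSWith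

variable [DecidableEq G] {D : Finset G} {lam mu : ℤ}

lemma dvd_card_filter_pow_eq [Finite G] (h : IsRegularPDSWith D lam mu)
    (hD : ∃ d ∈ D, d ∉ (powMonoidHom p : G →* G).range)
    (hDc : ∃ e ∉ D, e ∉ (powMonoidHom p : G →* G).range) {x : G} (hx : x ≠ 1) :
    p ∣ #{g ∈ D | g ^ p = x} := by
  cases nonempty_fintype G
  obtain ⟨d, hd, hdp⟩ := hD
  obtain ⟨e, he, hep⟩ := hDc
  obtain ⟨a, b, c, habc⟩ := h.exists_groupRingSum_pow_eq (ZMod p) p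
  have hcoeff : ∀ y ≠ 1, (#{g ∈ D | g ^ p = y} : ZMod p) = a * (if y ∈ D then 1 else 0) + c := by
    intro y hy
    rw [← coeff_groupRingSum_pow_char, habc]
    simp [coeff_groupRingSum, MonoidAlgebra.one_def, hy.symm]
  have hzero : ∀ y ∉ (powMonoidHom p : G →* G).range, a * (if y ∈ D then 1 else 0) + c = 0 := by
    intro y hy
    have hempty : {g ∈ D | g ^ p = y} = ∅ := filter_eq_empty_iff.2 fun g _ hg => hy ⟨g, hg⟩
    rw [← hcoeff y (ne_of_mem_of_not_mem (one_mem _) hy).symm, hempty, card_empty, Nat.cast_zero]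
  have hc : c = 0 := by simpa [he] using hzero e hep
  have ha : a = 0 := by simpa [hd, hc] using hzero d hdp
  rw [← ZMod.natCast_eq_zero_iff, hcoeff x hx, ha, hc, zero_mul, add_zero]

theorem isTrivialPDS_of_card_ker_powMonoidHom [Finite G] (h : IsRegularPDSWith D lam mu)
    (hker : Nat.card (powMonoidHom p : G →* G).ker = p) (hGp : Nat.card G ≠ p) :
    IsTrivialPDS (D : Set G) := by
  cases nonempty_fintype G
  have hbot : (powMonoidHom p : G →* G).ker ≠ ⊥ := fun hbot =>
    (Fact.out : p.Prime).ne_one (by rw [← hker, hbot, Subgroup.card_bot])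
  have htop : (powMonoidHom p : G →* G).ker ≠ ⊤ := fun htop =>
    hGp (by rw [← Subgroup.card_top, ← htop, hker])
  have hrange : (powMonoidHom p : G →* G).range ≠ ⊤ := by
    rwa [Ne, MonoidHom.range_eq_top, ← Finite.injective_iff_surjective, ← MonoidHom.ker_eq_bot_iff]
  by_cases hD : ∀ d ∈ D, d ∈ (powMonoidHom p : G →* G).range
  · exact h.isTrivialPDS_of_subset_subgroup hrange hD
  by_cases hDc : ∀ e ∈ (insert 1 D)ᶜ, e ∈ (powMonoidHom p : G →* G).range
  · exact h.isTrivialPDS_of_compl (h.compl.isTrivialPDS_of_subset_subgroup hrange hDc)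
  push Not at hD hDc
  obtain ⟨e, he, hep⟩ := hDc
  have heD : e ∉ D := fun heD => mem_compl.1 he (mem_insert_of_mem heD)
  refine h.isTrivialPDS_of_isUnionOfCosetsOff (isUnionOfCosetsOff_ker fun x hx => ?_) hbot htop
  rw [hker]
  exact h.dvd_card_filter_pow_eq hD ⟨e, heD, hep⟩ hx

end IsRegularPDSWith

end PowerMap

/-- Ma: if the abelian group `G` of order `v` has a cyclic Sylow
`p`-subgroup for some prime `p ∣ v` with `v ≠ p`, then every regular partial difference
set in `G` is trivial. -/
theorem no_nontrivial_pds_of_cyclic_sylow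
    (G : Type*) [CommGroup G] [Fintype G] (v : ℕ) (hv : Fintype.card G = v)
    (p : ℕ) (hp : p.Prime) (hpv : p ∣ v) (hvp : v ≠ p)
    (hcyc : ∀ P : Sylow p G, IsCyclic P)
    (k lam mu : ℕ) (D : Set G)
    (hpds : IsPDS D v k lam mu) (hreg : IsRegularPDS D) :
    IsTrivialPDS D := by
  classical
  have : Fact p.Prime := ⟨hp⟩
  subst hv
  rw [← Nat.card_eq_fintype_card] at hpv hvp
  lift D to Finset G using D.toFinite
  exact (hpds.isRegularPDSWith hreg).isTrivialPDS_of_card_ker_powMonoidHom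
    (card_ker_powMonoidHom_of_isCyclic_sylow hcyc hpv) hvp
end

section
/- Let G be an abelian group of finite order v and let p be a prime such that the Sylow p-subgroup of G is isomorphic to ℤ_{p^a} × ℤ_{p^b} with a ≠ b (a, b ≥ 1). Then G contains no nontrivial regular partial difference set; that is, for any parameters (v,k,λ,μ), every regular (v,k,λ,μ)-partial difference set D in G is trivial. -/
/-!
Index the characters of `G` by `G` itself through a pairing `β`. On the nontrivial characters the
indicator function of a regular partial difference set `D` takes only the two values given by the
roots of a quadratic polynomial of discriminant `Δ = (λ - μ) ^ 2 + 4 (k - μ)`. Let `p ^ (a + 1)` and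
`p ^ (a + 1 + b)` be the exponent and the order of the Sylow `p`-subgroup `P`, so that `1 ≤ b ≤ a`,
and let `w ∈ P` have order `p ^ (a + 1)`.

If `Δ` is a square, the two values are integers `θ, θ'`, and `(θ' - θ) δ = |G|` for an integer `δ`
which plays the part of `θ' - θ` for the dual set of `D`. As `p ^ (2 * b + 1)` divides `|G|`,
either `D` or its dual has character values that are congruent modulo `p ^ (b + 1)`. For a
character faithful on `⟨w⟩`, the kernel of its restriction to `P` has only `p ^ b` elements, and the
sums of `D` over the cosets of that kernel are too small for such a congruence not to be an
equality. Hence `D` or its dual takes one and the same value at all these characters, which makes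
`D` trivial.

If `Δ` is not a square, `D` is of Paley type, and `f = 1` on `D`, `f = -1` off `D ∪ {1}` is a
function whose nontrivial character sums are square roots of `|G|`. The Galois group of the
cyclotomic field then acts on `f` through signs, and the sign `-1` occurs; this forces `G = P` and
makes the character sums multiples of a quadratic Gauss sum. Their size leaves no cancellation:
`f` is constant on the coset of `w ^ p ^ a` modulo the kernel of any character not killing
`w ^ p ^ a`. Since `b ≠ 0`, two of these cosets connect `w ^ p ^ a` with a power of it at which `f`
has the opposite sign.
-/

/-! ### Relations between roots of unity of prime power order -/

section Cyclotomic

open Polynomial Finset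

variable {E : Type*} [Field E] [CharZero E] {p : ℕ} [Fact p.Prime] {k : ℕ} {ζ : E}

lemma cyclotomic_dvd_of_aeval_eq_zero {n : ℕ} [NeZero n] (hζ : IsPrimitiveRoot ζ n) {Q : ℤ[X]}
    (hQ : aeval ζ Q = 0) : cyclotomic n ℤ ∣ Q := by
  rw [cyclotomic_eq_minpoly hζ (NeZero.pos n)]
  exact minpoly.isIntegrallyClosed_dvd (hζ.isIntegral (NeZero.pos n)) hQ

-- Multiplying by `X ^ p ^ k - 1` turns `cyclotomic (p ^ (k + 1))` into `X ^ p ^ (k + 1) - 1`.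
lemma coeff_prime_pow_eq_coeff_zero_of_aeval_eq_zero (hζ : IsPrimitiveRoot ζ (p ^ (k + 1)))
    {Q : ℤ[X]} (hdeg : Q.degree < ↑(p ^ (k + 1))) (hQ : aeval ζ Q = 0) :
    Q.coeff (p ^ k) = Q.coeff 0 := by
  obtain ⟨R, rfl⟩ := cyclotomic_dvd_of_aeval_eq_zero hζ hQ
  obtain rfl | hR := eq_or_ne R 0
  · simp
  have hR_deg : R.natDegree < p ^ k := by
    rw [← natDegree_lt_iff_degree_lt (mul_ne_zero (cyclotomic_ne_zero _ ℤ) hR),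
      (cyclotomic.monic _ ℤ).natDegree_mul' hR, natDegree_cyclotomic,
      Nat.totient_prime_pow_succ Fact.out, pow_succ] at hdeg
    obtain ⟨m, hm⟩ := Nat.exists_eq_add_of_le' (Fact.out : p.Prime).one_le
    rw [hm] at hdeg ⊢
    simp only [Nat.add_sub_cancel, mul_add, mul_one] at hdeg
    omega
  have hmul : cyclotomic (p ^ (k + 1)) ℤ * R * X ^ p ^ k - cyclotomic (p ^ (k + 1)) ℤ * R =
      R * X ^ p ^ (k + 1) - R := by
    linear_combination R * cyclotomic_prime_pow_mul_X_pow_sub_one ℤ p k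
  have hlt : p ^ k < p ^ (k + 1) := Nat.pow_lt_pow_succ (Fact.out : p.Prime).one_lt
  have hcoeff := congrArg (coeff · (p ^ k)) hmul
  simp only [coeff_sub, coeff_mul_X_pow', le_refl, hlt.not_ge, coeff_eq_zero_of_natDegree_lt hR_deg,
    if_true, if_false, Nat.sub_self] at hcoeff
  linarith

lemma exists_aeval_eq_of_isIntegral (hζ : IsPrimitiveRoot ζ (p ^ (k + 1))) {t : E}
    (ht : IsIntegral ℤ t) (htζ : t ∈ IntermediateField.adjoin ℚ {ζ}) :
    ∃ g : ℤ[X], aeval ζ g = t := by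
  let K := IntermediateField.adjoin ℚ {ζ}
  have : IsCyclotomicExtension {p ^ (k + 1)} ℚ K :=
    (IntermediateField.isCyclotomicExtension_singleton_iff_eq_adjoin _ _ _ _ hζ).2 rfl
  let ζ' : K := ⟨ζ, IntermediateField.mem_adjoin_simple_self ℚ ζ⟩
  have hζ' : IsPrimitiveRoot ζ' (p ^ (k + 1)) :=
    .of_map_of_injective (f := algebraMap K E) hζ (algebraMap K E).injective
  have ht' : IsIntegral ℤ (⟨t, htζ⟩ : K) :=
    (isIntegral_algebraMap_iff (A := K) (B := E) (algebraMap K E).injective).1 ht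
  obtain ⟨y, hy⟩ := (IsCyclotomicExtension.Rat.isIntegralClosure_adjoin_singleton_of_prime_pow
    hζ').isIntegral_iff.1 ht'
  obtain ⟨g, hg⟩ := (Algebra.adjoin_singleton_eq_range_aeval ℤ ζ').le y.2
  refine ⟨g, ?_⟩
  calc aeval ζ g = algebraMap K E (aeval ζ' g) := (aeval_algebraMap_apply E ζ' g)
    _ = t := congrArg (algebraMap K E) (hg.trans hy)

lemma dvd_sub_of_sum_mul_pow_eq_mul_aeval (hζ : IsPrimitiveRoot ζ (p ^ (k + 1))) {c : ℕ → ℤ}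
    {N : ℤ} {g : ℤ[X]}
    (hsum : ∑ j ∈ range (p ^ (k + 1)), (c j : E) * ζ ^ j = N * aeval ζ g) :
    N ∣ c (p ^ k) - c 0 := by
  have : NeZero (p ^ (k + 1)) := ⟨(pow_pos (Fact.out : p.Prime).pos _).ne'⟩
  let r := g %ₘ cyclotomic (p ^ (k + 1)) ℤ
  have hr : aeval ζ r = aeval ζ g := by
    refine aeval_modByMonic_eq_self_of_root ?_
    rw [aeval_def, eval₂_eq_eval_map, map_cyclotomic]
    exact hζ.isRoot_cyclotomic (NeZero.pos _)
  have hr_mem : r ∈ degreeLT ℤ (p ^ (k + 1)) := by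
    refine mem_degreeLT.2 ((degree_modByMonic_lt g (cyclotomic.monic _ ℤ)).trans_le ?_)
    rw [degree_cyclotomic]
    exact_mod_cast Nat.totient_le _
  let Q : ℤ[X] := ∑ j ∈ range (p ^ (k + 1)), C (c j) * X ^ j - C N * r
  have hQ_mem : Q ∈ degreeLT ℤ (p ^ (k + 1)) := by
    refine sub_mem (sum_mem fun j hj ↦ ?_) ?_
    · exact mem_degreeLT.2 ((degree_C_mul_X_pow_le j _).trans_lt (mod_cast mem_range.1 hj))
    · exact C_mul' N r ▸ Submodule.smul_mem _ N hr_mem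
  have hQ_coeff : ∀ i < p ^ (k + 1), Q.coeff i = c i - N * r.coeff i := fun i hi ↦ by
    simp [Q, hi]
  have hQ_root : aeval ζ Q = 0 := by simp [Q, hr, hsum]
  have hQ := coeff_prime_pow_eq_coeff_zero_of_aeval_eq_zero hζ
    (mem_degreeLT.1 hQ_mem) hQ_root
  rw [hQ_coeff _ (Nat.pow_lt_pow_succ (Fact.out : p.Prime).one_lt), hQ_coeff 0 (NeZero.pos _)] at hQ
  exact ⟨r.coeff (p ^ k) - r.coeff 0, by linarith⟩

lemma dvd_sub_of_sum_mul_pow_eq_mul (hζ : IsPrimitiveRoot ζ (p ^ (k + 1))) {c : ℕ → ℤ} {N : ℤ}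
    (hN : N ≠ 0) {t : E} (ht : IsIntegral ℤ t)
    (hsum : ∑ j ∈ range (p ^ (k + 1)), (c j : E) * ζ ^ j = N * t) :
    N ∣ c (p ^ k) - c 0 := by
  have htζ : t ∈ IntermediateField.adjoin ℚ {ζ} := by
    rw [← mul_div_cancel_left₀ t (Int.cast_ne_zero.2 hN), ← hsum]
    exact div_mem (sum_mem fun j _ ↦ mul_mem (intCast_mem _ _)
      (pow_mem (IntermediateField.mem_adjoin_simple_self ℚ ζ) j)) (intCast_mem _ _)
  obtain ⟨g, rfl⟩ := exists_aeval_eq_of_isIntegral hζ ht htζ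
  exact dvd_sub_of_sum_mul_pow_eq_mul_aeval hζ hsum

end Cyclotomic

/-! ### Characters indexed by a pairing -/

section CharSum

variable {G E : Type*} [CommGroup G] [Field E] (β : G →* G →* E)

lemma bichar_inv_mul (x y : G) : β x⁻¹ y * β x y = 1 := by
  rw [← MonoidHom.mul_apply, ← map_mul, inv_mul_cancel, map_one, MonoidHom.one_apply]

lemma bichar_ne_zero (x y : G) : β x y ≠ 0 := right_ne_zero_of_mul_eq_one (bichar_inv_mul β x y)

lemma bichar_pow_eq_one_of_pow_eq_one {n : ℕ} {x : G} (hx : x ^ n = 1) (y : G) :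
    β x y ^ n = 1 := by
  rw [← MonoidHom.pow_apply, ← map_pow, hx, map_one, MonoidHom.one_apply]

section

variable {β}

lemma exists_bichar_ne_one (hβ : Function.Injective β) {x : G} (hx : x ≠ 1) : ∃ h, β x h ≠ 1 :=
  DFunLike.ne_iff.1 ((map_ne_one_iff β hβ).2 hx)

lemma exists_bichar_ne_one_and_ne_one (hβ : Function.Injective β) {x y h : G} (hx : β x h = 1)
    (hx' : x ≠ 1) (hy : β y h ≠ 1) : ∃ h', β x h' ≠ 1 ∧ β y h' ≠ 1 := by
  obtain ⟨h', hh'⟩ := exists_bichar_ne_one hβ hx'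
  by_cases hy' : β y h' = 1
  · exact ⟨h * h', by rwa [map_mul, hx, one_mul], by rwa [map_mul, hy', mul_one]⟩
  · exact ⟨h', hh', hy'⟩

lemma bichar_pow_ne_one_of_coprime {s : ℕ} (hs : (Nat.card G).Coprime s) {x h : G}
    (hxh : β x h ≠ 1) : β (x ^ s) h ≠ 1 := fun hxs ↦ hxh <| by
  rw [map_pow, MonoidHom.pow_apply] at hxs
  have hx_card := bichar_pow_eq_one_of_pow_eq_one β (pow_card_eq_one' (x := x)) h
  have := pow_gcd_eq_one.2 ⟨hx_card, hxs⟩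
  rwa [Nat.coprime_iff_gcd_eq_one.1 hs, pow_one] at this

variable {p : ℕ} [hp : Fact p.Prime]

lemma isPrimitiveRoot_bichar {a : ℕ} {w : G} (hw : w ^ p ^ (a + 1) = 1) {h : G}
    (hh : β (w ^ p ^ a) h ≠ 1) : IsPrimitiveRoot (β w h) (p ^ (a + 1)) := by
  rw [map_pow, MonoidHom.pow_apply] at hh
  exact IsPrimitiveRoot.iff_orderOf.2
    (orderOf_eq_prime_pow hh (bichar_pow_eq_one_of_pow_eq_one β hw h))

lemma isPrimitiveRoot_bichar_of_pow_eq_one {x h : G} (hx : x ^ p = 1) (hxh : β x h ≠ 1) :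
    IsPrimitiveRoot (β x h) p :=
  IsPrimitiveRoot.iff_orderOf.2
    (orderOf_eq_prime (bichar_pow_eq_one_of_pow_eq_one β hx h) hxh)

lemma exists_bichar_pow_eq {x y h : G} (hx : x ^ p = 1) (hxh : β x h ≠ 1) (hy : y ^ p = 1) :
    ∃ i : ℕ, β (x ^ i) h = β y h := by
  obtain ⟨i, -, hi⟩ := (isPrimitiveRoot_bichar_of_pow_eq_one hx hxh).eq_pow_of_pow_eq_one
    (bichar_pow_eq_one_of_pow_eq_one β hy h)
  exact ⟨i, by rw [map_pow, MonoidHom.pow_apply, hi]⟩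

lemma exists_bichar_eq_one_of_dvd_card_ker [Finite G] {h : G} (hh : p ∣ Nat.card (β.flip h).ker) :
    ∃ κ ≠ 1, κ ^ p = 1 ∧ β κ h = 1 := by
  obtain ⟨⟨κ, hκh⟩, hκ⟩ := exists_prime_orderOf_dvd_card' p hh
  rw [Subgroup.orderOf_mk] at hκ
  exact ⟨κ, fun h ↦ hp.out.one_lt.ne (by rw [← hκ, h, orderOf_one]), hκ ▸ pow_orderOf_eq_one κ, hκh⟩

end

/-- The annihilator `{x | β x = 1 on H}` of a subgroup `H` under the pairing `β`, through which the
characters of `G` are indexed by `G` itself. -/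
def annihilator (H : Subgroup G) : Subgroup G where
  carrier := {x | ∀ y ∈ H, β x y = 1}
  mul_mem' hx hx' y hy := by rw [map_mul, MonoidHom.mul_apply, hx y hy, hx' y hy, one_mul]
  one_mem' y _ := by rw [map_one, MonoidHom.one_apply]
  inv_mem' {x} hx y hy := by simpa only [hx y hy, mul_one] using bichar_inv_mul β x y

variable {β} in
lemma mem_annihilator {H : Subgroup G} {x : G} : x ∈ annihilator β H ↔ ∀ y ∈ H, β x y = 1 := Iff.rfl

lemma mem_annihilator_zpowers {g x : G} : x ∈ annihilator β (Subgroup.zpowers g) ↔ β x g = 1 := by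
  rw [mem_annihilator, ← MonoidHom.mem_ker, ← Subgroup.zpowers_le]
  rfl

lemma sum_subgroup_bichar (H : Subgroup G) [Fintype H] (x : G) [Decidable (x ∈ annihilator β H)] :
    ∑ y : H, β x y = if x ∈ annihilator β H then (Fintype.card H : E) else 0 := by
  split_ifs with hx
  · simp [fun y : H ↦ hx y y.2]
  · refine sum_hom_units_eq_zero ((β x).comp H.subtype) fun h ↦ hx fun y hy ↦ ?_
    exact DFunLike.congr_fun h ⟨y, hy⟩

variable [Fintype G]

lemma sum_bichar [DecidableEq G] (hβ : Function.Injective β) (x : G) :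
    ∑ h, β x h = if x = 1 then (Fintype.card G : E) else 0 := by
  split_ifs with hx
  · simp [hx]
  · exact sum_hom_units_eq_zero (β x) ((map_ne_one_iff β hβ).2 hx)

/-- The Fourier transform of an integer-valued function on `G` with respect to the pairing `β`:
its value at `h` is the value of the character `β · h` at the corresponding group ring element. -/
def charSum : (G → ℤ) →+ (G → E) where
  toFun f h := ∑ x, (f x : E) * β x h
  map_zero' := by ext; simp
  map_add' f g := by ext; simp [add_mul, Finset.sum_add_distrib]

lemma charSum_apply (f : G → ℤ) (h : G) : charSum β f h = ∑ x, (f x : E) * β x h := rfl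

lemma charSum_one (f : G → ℤ) : charSum β f 1 = ((∑ x, f x : ℤ) : E) := by
  simp [charSum_apply]

lemma sum_charSum_mul_bichar (hβ : Function.Injective β) (f : G → ℤ) (g : G) :
    ∑ h, charSum β f h * β g⁻¹ h = Fintype.card G * f g := by
  classical
  calc ∑ h, charSum β f h * β g⁻¹ h
      = ∑ x, (f x : E) * ∑ h, β (x * g⁻¹) h := by
        simp only [charSum_apply, Finset.sum_mul, Finset.mul_sum, map_mul, MonoidHom.mul_apply,
          mul_assoc]
        exact Finset.sum_comm
    _ = Fintype.card G * f g := by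
        simp only [sum_bichar β hβ, mul_inv_eq_one, mul_ite, mul_zero, Finset.sum_ite_eq',
          Finset.mem_univ, if_true, mul_comm]

lemma charSum_injective [CharZero E] (hβ : Function.Injective β) :
    Function.Injective (charSum β) := fun f f' h ↦ by
  ext g
  have := sum_charSum_mul_bichar β hβ f g
  rw [h, sum_charSum_mul_bichar β hβ] at this
  exact (Int.cast_injective (mul_left_cancel₀ (by simp) this)).symm

lemma charSum_translate (f : G → ℤ) (z h : G) :
    charSum β (fun x ↦ f (z * x)) h = β z⁻¹ h * charSum β f h := by
  simp only [charSum_apply, Finset.mul_sum]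
  refine Fintype.sum_equiv (Equiv.mulLeft z) _ _ fun x ↦ ?_
  rw [Equiv.coe_mulLeft, map_mul, MonoidHom.mul_apply]
  linear_combination -(f (z * x) : E) * β x h * bichar_inv_mul β z h

lemma sum_subgroup_charSum (H : Subgroup G) [Fintype H] [Fintype (annihilator β H)] (f : G → ℤ)
    (h : G) :
    ∑ y : H, charSum β f (h * y) =
      Fintype.card H * ∑ x : annihilator β H, (f x : E) * β x h := by
  classical
  calc ∑ y : H, charSum β f (h * y)
      = ∑ x, (f x : E) * β x h * ∑ y : H, β x y := by
        simp only [charSum_apply, map_mul, Finset.mul_sum, mul_assoc]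
        exact Finset.sum_comm
    _ = ∑ x with x ∈ annihilator β H, (f x : E) * β x h * Fintype.card H := by
        simp only [sum_subgroup_bichar, mul_ite, mul_zero, Finset.sum_filter]
    _ = Fintype.card H * ∑ x : annihilator β H, (f x : E) * β x h := by
        rw [← Finset.sum_mul, mul_comm]
        congr 1
        exact Finset.sum_subtype _ (by simp) _

end CharSum

section CosetSum

variable {G E : Type*} [CommGroup G]

/-- The sums of an integer-valued function on `G` over the cosets of `K`:
`cosetSum K f z` is the sum of `f` over `z * K`. -/
def cosetSum (K : Subgroup G) [Fintype K] : (G → ℤ) →+ (G → ℤ) where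
  toFun f z := ∑ x : K, f (z * x)
  map_zero' := by ext; simp
  map_add' f g := by ext; simp [Finset.sum_add_distrib]

section

variable (K : Subgroup G) [Fintype K]

lemma cosetSum_apply (f : G → ℤ) (z : G) : cosetSum K f z = ∑ x : K, f (z * x) := rfl

variable {K} in
lemma cosetSum_mul_right (f : G → ℤ) (z : G) {k : G} (hk : k ∈ K) :
    cosetSum K f (z * k) = cosetSum K f z :=
  Fintype.sum_equiv (Equiv.mulLeft ⟨k, hk⟩) _ _ fun x ↦ by simp [mul_assoc]

lemma cosetSum_translate (f : G → ℤ) (y z : G) :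
    cosetSum K (fun x ↦ f (y * x)) z = cosetSum K f (y * z) := by
  simp only [cosetSum_apply, mul_assoc]

variable {K} in
lemma charSum_cosetSum [Field E] [Fintype G] {β : G →* G →* E} {h : G}
    (hK : ∀ x ∈ K, β x h = 1) (f : G → ℤ) :
    charSum β (cosetSum K f) h = Fintype.card K * charSum β f h := by
  calc charSum β (cosetSum K f) h = ∑ x : K, charSum β (fun z ↦ f (x * z)) h := by
        simp only [charSum_apply, cosetSum_apply, Int.cast_sum, Finset.sum_mul, mul_comm (_ : G)]
        exact Finset.sum_comm
    _ = Fintype.card K * charSum β f h := by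
        simp only [charSum_translate, hK _ (inv_mem (Subtype.prop _)), one_mul, Finset.sum_const,
          Finset.card_univ, nsmul_eq_mul]

end

variable [CommRing E] [IsDomain E] {χ : G →* E} {K L : Subgroup G} {w : G} {m : ℕ}

lemma bijective_pow_mul (hK : ∀ x, x ∈ K ↔ x ∈ L ∧ χ x = 1) (hw : w ∈ L)
    (hχw : IsPrimitiveRoot (χ w) m) (hm : 0 < m) (hχ : ∀ x ∈ L, χ x ^ m = 1) :
    Function.Bijective fun x : Fin m × K ↦
      (⟨w ^ x.1.val * x.2, mul_mem (pow_mem hw _) ((hK _).1 x.2.2).1⟩ : L) := by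
  have : NeZero m := ⟨hm.ne'⟩
  have hχ_pow_mul (j : ℕ) (x : K) : χ (w ^ j * x) = χ w ^ j := by
    rw [map_mul, map_pow, ((hK x).1 x.2).2, mul_one]
  constructor
  · rintro ⟨i, x⟩ ⟨j, y⟩ hxy
    have hxy : w ^ i.val * x = w ^ j.val * y := congrArg Subtype.val hxy
    obtain rfl : i = j := Fin.ext <| hχw.pow_inj i.2 j.2 <| by
      rw [← hχ_pow_mul i x, hxy, hχ_pow_mul]
    exact Prod.ext rfl (Subtype.ext (mul_left_cancel hxy))
  · rintro ⟨y, hy⟩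
    obtain ⟨j, hj, hjy⟩ := hχw.eq_pow_of_pow_eq_one (hχ y hy)
    refine ⟨(⟨j, hj⟩, ⟨(w ^ j)⁻¹ * y, (hK _).2 ⟨mul_mem (inv_mem (pow_mem hw j)) hy, ?_⟩⟩), ?_⟩
    · rw [map_mul, ← hjy, ← map_pow, ← map_mul, inv_mul_cancel, map_one]
    · exact Subtype.ext (mul_inv_cancel_left _ _)

lemma card_eq_mul_card_of_isPrimitiveRoot [Fintype K] [Fintype L]
    (hK : ∀ x, x ∈ K ↔ x ∈ L ∧ χ x = 1) (hw : w ∈ L) (hχw : IsPrimitiveRoot (χ w) m) (hm : 0 < m)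
    (hχ : ∀ x ∈ L, χ x ^ m = 1) : Fintype.card L = m * Fintype.card K := by
  rw [← Fintype.card_of_bijective (bijective_pow_mul hK hw hχw hm hχ), Fintype.card_prod,
    Fintype.card_fin]

lemma sum_mul_eq_sum_range_cosetSum [Fintype K] [Fintype L] (hK : ∀ x, x ∈ K ↔ x ∈ L ∧ χ x = 1)
    (hw : w ∈ L) (hχw : IsPrimitiveRoot (χ w) m) (hm : 0 < m) (hχ : ∀ x ∈ L, χ x ^ m = 1)
    (f : G → ℤ) :
    ∑ x : L, (f x : E) * χ x =
      ∑ j ∈ Finset.range m, (cosetSum K f (w ^ j) : E) * χ w ^ j := by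
  calc ∑ x : L, (f x : E) * χ x
      = ∑ x : Fin m × K, (f (w ^ x.1.val * x.2) : E) * χ w ^ x.1.val := by
        refine (Fintype.sum_bijective _ (bijective_pow_mul hK hw hχw hm hχ) _ _ fun x ↦ ?_).symm
        simp only [map_mul, map_pow, ((hK x.2).1 x.2.2).2, mul_one]
    _ = ∑ j ∈ Finset.range m, (cosetSum K f (w ^ j) : E) * χ w ^ j := by
        rw [Fintype.sum_prod_type, Finset.sum_range]
        simp only [cosetSum_apply, Int.cast_sum, Finset.sum_mul]

end CosetSum

/-! ### Congruences between coset sums -/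

local notation "𝟙[" A "]" => Set.indicator A fun _ ↦ (1 : ℤ)

section Congruence

variable {G E : Type*} [CommGroup G] [Field E] {β : G →* G →* E} {p : ℕ}

lemma isIntegral_bichar [Finite G] (x y : G) : IsIntegral ℤ (β x y) := by
  refine .of_pow (n := Nat.card G) Nat.card_pos ?_
  rw [← map_pow, pow_card_eq_one', map_one]
  exact isIntegral_one

variable [Fintype G]

lemma isIntegral_charSum (f : G → ℤ) (h : G) : IsIntegral ℤ (charSum β f h) :=
  IsIntegral.sum _ fun x _ ↦ (isIntegral_algebraMap (x := f x)).mul (isIntegral_bichar x h)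

lemma exists_isIntegral_eq_mul_of_coprime {m n : ℤ} (hmn : IsCoprime m n) {s t : E}
    (hs : IsIntegral ℤ s) (ht : IsIntegral ℤ t) (h : m * s = n * t) :
    ∃ u, IsIntegral ℤ u ∧ s = n * u := by
  obtain ⟨i, j, hij⟩ := hmn
  have hij : (i : E) * m + j * n = 1 := by exact_mod_cast congrArg (Int.cast : ℤ → E) hij
  refine ⟨i * t + j * s, ?_, by linear_combination -s * hij + i * h⟩
  exact ((isIntegral_algebraMap (x := i)).mul ht).add ((isIntegral_algebraMap (x := j)).mul hs)

lemma exists_sum_annihilator_eq_mul {H : Subgroup G} [Fintype (annihilator β H)] {N : ℤ}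
    (hH : IsCoprime (Nat.card H : ℤ) N) {f : G → ℤ}
    (hf : ∀ h, ∃ t, IsIntegral ℤ t ∧ charSum β f h = N * t) (h : G) :
    ∃ t, IsIntegral ℤ t ∧ ∑ x : annihilator β H, (f x : E) * β x h = N * t := by
  classical
  choose t ht hft using hf
  refine exists_isIntegral_eq_mul_of_coprime hH (t := ∑ y : H, t (h * y))
    (IsIntegral.sum _ fun x _ ↦ (isIntegral_algebraMap (x := f x)).mul (isIntegral_bichar x.1 h))
    (IsIntegral.sum _ fun y _ ↦ ht _) ?_
  simp only [Finset.mul_sum, ← hft]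
  rw [sum_subgroup_charSum, Nat.card_eq_fintype_card, Int.cast_natCast, Finset.mul_sum]

variable [CharZero E] [Fact p.Prime]

lemma dvd_cosetSum_mul_sub_cosetSum {a : ℕ} {N : ℤ} (hN : N ≠ 0) {H K : Subgroup G} [Fintype K]
    (hH : IsCoprime (Nat.card H : ℤ) N) {w h : G}
    (hK : ∀ x, x ∈ K ↔ x ∈ annihilator β H ∧ β x h = 1) (hw : w ∈ annihilator β H)
    (hβw : IsPrimitiveRoot (β w h) (p ^ (a + 1)))
    (hβ : ∀ x ∈ annihilator β H, β x h ^ p ^ (a + 1) = 1) {f : G → ℤ}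
    (hf : ∀ h, ∃ t, IsIntegral ℤ t ∧ charSum β f h = N * t) (z : G) :
    N ∣ cosetSum K f (z * w ^ p ^ a) - cosetSum K f z := by
  classical
  have hf_translate (h : G) : ∃ t, IsIntegral ℤ t ∧ charSum β (fun x ↦ f (z * x)) h = N * t := by
    obtain ⟨t, ht, hft⟩ := hf h
    exact ⟨β z⁻¹ h * t, (isIntegral_bichar _ _).mul ht, by
      rw [charSum_translate, hft, mul_left_comm]⟩
  obtain ⟨t, ht, hsum⟩ := exists_sum_annihilator_eq_mul hH hf_translate h
  have hsum' := sum_mul_eq_sum_range_cosetSum (χ := β.flip h) hK hw hβw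
    (pow_pos (Fact.out : p.Prime).pos _) hβ fun x ↦ f (z * x)
  have hdvd := dvd_sub_of_sum_mul_pow_eq_mul hβw hN ht (hsum'.symm.trans hsum)
  rwa [cosetSum_translate, cosetSum_translate, pow_zero, mul_one] at hdvd

end Congruence

section Sylow

variable {G E : Type*} [CommGroup G] [Finite G] [Field E] {β : G →* G →* E} {p : ℕ}
  [Fact p.Prime]

lemma mem_sylow_iff_pow_card_eq_one (P : Sylow p G) {x : G} : x ∈ P ↔ x ^ Nat.card P = 1 := by
  refine ⟨fun hx ↦ congrArg Subtype.val (pow_card_eq_one' (x := (⟨x, hx⟩ : P))), fun hx ↦ ?_⟩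
  obtain ⟨n, hn⟩ := IsPGroup.iff_card.1 P.2
  obtain ⟨m, -, hm⟩ := (Nat.dvd_prime_pow Fact.out).1 (orderOf_dvd_of_pow_eq_one (hn ▸ hx))
  have hx_pgroup : IsPGroup p (Subgroup.zpowers x) := .of_card (hm ▸ Nat.card_zpowers x)
  exact hx_pgroup.le_sylow_of_normal P (Subgroup.mem_zpowers x)

lemma sylow_eq_annihilator_range_pow (hβ : Function.Injective β) (P : Sylow p G) :
    (P : Subgroup G) = annihilator β (powMonoidHom (Nat.card P)).range := by
  ext x
  have hpow (y : G) : β x (y ^ Nat.card P) = β (x ^ Nat.card P) y := by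
    rw [map_pow, map_pow, MonoidHom.pow_apply]
  change x ∈ P ↔ _
  rw [mem_sylow_iff_pow_card_eq_one, ← map_eq_one_iff β hβ, mem_annihilator]
  simp [DFunLike.ext_iff, MonoidHom.mem_range, hpow]

lemma card_range_pow_card_sylow (P : Sylow p G) :
    Nat.card (powMonoidHom (α := G) (Nat.card P)).range = (P : Subgroup G).index := by
  rw [← Subgroup.index_ker]
  congr 1
  ext x
  exact (mem_sylow_iff_pow_card_eq_one P).symm

end Sylow

section IndicatorSums

variable {G E : Type*} [CommGroup G] [Field E] {β : G →* G →* E} (K : Subgroup G) [Fintype K]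
  (A : Set G) (z : G)

lemma cosetSum_indicator_nonneg : 0 ≤ cosetSum K 𝟙[A] z :=
  Finset.sum_nonneg fun _ _ ↦ Set.indicator_nonneg (fun _ _ ↦ zero_le_one) _

lemma cosetSum_indicator_le_card : cosetSum K 𝟙[A] z ≤ Fintype.card K := by
  refine (Finset.sum_le_card_nsmul _ _ 1 fun x _ ↦ ?_).trans (by simp)
  exact Set.indicator_le_self' (fun _ _ ↦ zero_le_one) _

variable {A} in
lemma cosetSum_indicator_lt_card (hA : 1 ∉ A) : cosetSum K 𝟙[A] 1 < Fintype.card K := by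
  have h : cosetSum K 𝟙[A] 1 < ∑ x : K, 1 :=
    Finset.sum_lt_sum (fun x _ ↦ Set.indicator_le_self' (fun _ _ ↦ zero_le_one) _)
      ⟨1, Finset.mem_univ _, by simp [hA]⟩
  simpa using h

lemma cosetSum_indicator_one : cosetSum K 𝟙[{1}] z = 𝟙[(K : Set G)] z := by
  classical
  have hsum (hz : z⁻¹ ∈ K) : cosetSum K 𝟙[{1}] z = 1 := by
    rw [cosetSum_apply, Fintype.sum_eq_single ⟨z⁻¹, hz⟩]
    · simp
    · refine fun x hx ↦ Set.indicator_of_notMem (fun h ↦ hx (Subtype.ext ?_)) _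
      exact eq_inv_of_mul_eq_one_right h
  by_cases hz : z ∈ K
  · rw [hsum (inv_mem hz), Set.indicator_of_mem hz]
  · rw [Set.indicator_of_notMem hz]
    refine Finset.sum_eq_zero fun x _ ↦ Set.indicator_of_notMem (fun h ↦ hz ?_) _
    exact eq_inv_of_mul_eq_one_left h ▸ inv_mem x.2

lemma charSum_indicator_one [Fintype G] (h : G) : charSum β 𝟙[{1}] h = 1 := by
  classical
  simp only [charSum_apply, Set.indicator_apply, Set.mem_singleton_iff]
  simp

lemma cosetSum_indicator_sub_smul (r : ℤ) :
    cosetSum K (𝟙[A] - r • 𝟙[{1}]) z = cosetSum K 𝟙[A] z - r * 𝟙[(K : Set G)] z := by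
  simp only [map_sub, map_zsmul, Pi.sub_apply, Pi.smul_apply, cosetSum_indicator_one, smul_eq_mul]

lemma charSum_indicator_sub_smul [Fintype G] (r : ℤ) (h : G) :
    charSum β (𝟙[A] - r • 𝟙[{1}]) h = charSum β 𝟙[A] h - r := by
  simp only [map_sub, map_zsmul, Pi.sub_apply, Pi.smul_apply, charSum_indicator_one,
    zsmul_one]

lemma charSum_eq_zero_of_translate_eq [Fintype G] {f : G → ℤ} {q h : G}
    (hf : ∀ z, f (z * q) = f z) (hh : β q h ≠ 1) : charSum β f h = 0 := by
  have := charSum_translate β f q h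
  simp only [mul_comm q, hf] at this
  refine (mul_eq_zero.1 (?_ : (β q h - 1) * charSum β f h = 0)).resolve_left (sub_ne_zero.2 hh)
  linear_combination β q h * this + charSum β f h * bichar_inv_mul β q h

end IndicatorSums

section Unbalanced

lemma eq_of_dvd_sub_of_mem_Ico {m n x y : ℤ} (hx : x ∈ Set.Ico m (m + n))
    (hy : y ∈ Set.Ico m (m + n)) (h : n ∣ x - y) : x = y := by
  refine sub_eq_zero.1 (Int.eq_zero_of_abs_lt_dvd h ?_)
  rw [abs_lt]
  constructor <;> linarith [hx.1, hx.2, hy.1, hy.2]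

variable {G E : Type*} [CommGroup G] [Field E] {β : G →* G →* E} {p : ℕ} [Fact p.Prime]
  {P : Sylow p G} {a b : ℕ} {w : G}

lemma card_eq_pow_of_pow_ne_one [Finite G] (hw : w ∈ P) (hexp : ∀ x ∈ P, x ^ p ^ (a + 1) = 1)
    (hcard : Nat.card P = p ^ (a + 1 + b)) {h : G} (hh : β (w ^ p ^ a) h ≠ 1) {K : Subgroup G}
    [Fintype K] (hK : ∀ x, x ∈ K ↔ x ∈ P ∧ β x h = 1) : Fintype.card K = p ^ b := by
  have := Fintype.ofFinite P
  have hpos := pow_pos (Fact.out : p.Prime).pos (a + 1)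
  have := card_eq_mul_card_of_isPrimitiveRoot (χ := β.flip h) (L := P) hK hw
    (isPrimitiveRoot_bichar (hexp w hw) hh) hpos
    fun x hx ↦ bichar_pow_eq_one_of_pow_eq_one β (hexp x hx) h
  rw [← Nat.card_eq_fintype_card, hcard, pow_add] at this
  exact (Nat.eq_of_mul_eq_mul_left hpos this).symm

variable [Fintype G]

lemma pow_dvd_cosetSum_mul_sub_cosetSum [CharZero E] (hβ : Function.Injective β) (hw : w ∈ P)
    (hexp : ∀ x ∈ P, x ^ p ^ (a + 1) = 1) {h : G} (hh : β (w ^ p ^ a) h ≠ 1) {K : Subgroup G}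
    [Fintype K] (hK : ∀ x, x ∈ K ↔ x ∈ P ∧ β x h = 1) {f : G → ℤ} {n : ℕ}
    (hf : ∀ h, ∃ t, IsIntegral ℤ t ∧ charSum β f h = (p ^ n : ℤ) * t) (z : G) :
    (p ^ n : ℤ) ∣ cosetSum K f (z * w ^ p ^ a) - cosetSum K f z := by
  have hβw := isPrimitiveRoot_bichar (hexp w hw) hh
  have hmem (x : G) : x ∈ P ↔ x ∈ annihilator β (powMonoidHom (Nat.card P)).range := by
    rw [← sylow_eq_annihilator_range_pow hβ]; rfl
  simp only [hmem] at hK hw hexp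
  refine dvd_cosetSum_mul_sub_cosetSum (pow_ne_zero n (mod_cast (Fact.out : p.Prime).ne_zero)) ?_
    hK hw hβw (fun x hx ↦ bichar_pow_eq_one_of_pow_eq_one β (hexp x hx) h)
    (by exact_mod_cast hf) z
  rw [card_range_pow_card_sylow]
  exact_mod_cast Nat.isCoprime_iff_coprime.2
    (((Fact.out : p.Prime).coprime_iff_not_dvd.2 P.not_dvd_index).symm.pow_right n)

lemma pow_dvd_cosetSum_indicator_sub [CharZero E] (hβ : Function.Injective β) (hw : w ∈ P)
    (hexp : ∀ x ∈ P, x ^ p ^ (a + 1) = 1) {h : G} (hh : β (w ^ p ^ a) h ≠ 1) {K : Subgroup G}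
    [Fintype K] (hK : ∀ x, x ∈ K ↔ x ∈ P ∧ β x h = 1) {A : Set G} {n : ℕ} {r : ℤ}
    (hr : ∀ h, ∃ t : ℤ, charSum β 𝟙[A] h = r + (p ^ n : ℤ) * t) (z : G) :
    (p ^ n : ℤ) ∣ cosetSum K (𝟙[A] - r • 𝟙[{1}]) (z * w ^ p ^ a) -
      cosetSum K (𝟙[A] - r • 𝟙[{1}]) z := by
  refine pow_dvd_cosetSum_mul_sub_cosetSum hβ hw hexp hh hK (fun y ↦ ?_) z
  obtain ⟨t, ht⟩ := hr y
  refine ⟨t, isIntegral_algebraMap (x := t), ?_⟩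
  rw [charSum_indicator_sub_smul, ht, add_sub_cancel_left]

-- The values of `F₀ = cosetSum K (𝟙[A] - c • 𝟙[{1}])` all lie in `[0, p ^ b]`. Its invariance
-- under `w ^ p ^ a` modulo `p ^ (b + 1)` is thus an equality, and its Fourier coefficient vanishes.
lemma charSum_indicator_eq_cosetSum_sub [CharZero E] (hβ : Function.Injective β) (hw : w ∈ P)
    (hexp : ∀ x ∈ P, x ^ p ^ (a + 1) = 1) (hcard : Nat.card P = p ^ (a + 1 + b)) {h : G}
    (hh : β (w ^ p ^ a) h ≠ 1) {K : Subgroup G} [Fintype K]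
    (hK : ∀ x, x ∈ K ↔ x ∈ P ∧ β x h = 1) {A : Set G} {c : ℤ}
    (hc : c = cosetSum K 𝟙[A] 1 - cosetSum K 𝟙[A] (w ^ p ^ a))
    (hA : ∀ h, ∃ t : ℤ, charSum β 𝟙[A] h = c + (p ^ (b + 1) : ℤ) * t) :
    charSum β 𝟙[A] h = c := by
  let F₀ := cosetSum K (𝟙[A] - c • 𝟙[{1}])
  have hF₀ (z : G) : F₀ z = cosetSum K 𝟙[A] z - c * 𝟙[(K : Set G)] z :=
    cosetSum_indicator_sub_smul K A z c
  have hK_card : (Fintype.card K : ℤ) = p ^ b :=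
    mod_cast card_eq_pow_of_pow_ne_one hw hexp hcard hh hK
  have hpow : (p ^ b : ℤ) < p ^ (b + 1) := mod_cast Nat.pow_lt_pow_succ (Fact.out : p.Prime).one_lt
  have hF (z : G) : cosetSum K 𝟙[A] z ∈ Set.Ico (0 : ℤ) (0 + p ^ (b + 1)) :=
    ⟨cosetSum_indicator_nonneg K A z, by linarith [hK_card ▸ cosetSum_indicator_le_card K A z]⟩
  have hF₀_mem (z : G) : F₀ z ∈ Set.Ico (0 : ℤ) (0 + p ^ (b + 1)) := by
    by_cases hz : z ∈ K
    · have hFz : cosetSum K 𝟙[A] z = cosetSum K 𝟙[A] 1 := by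
        rw [← one_mul z, cosetSum_mul_right _ _ hz]
      rw [hF₀, Set.indicator_of_mem hz, hFz, hc, mul_one, sub_sub_cancel]
      exact hF _
    · rw [hF₀, Set.indicator_of_notMem hz, mul_zero, sub_zero]
      exact hF z
  have hF₀_translate (z : G) : F₀ (z * w ^ p ^ a) = F₀ z :=
    eq_of_dvd_sub_of_mem_Ico (hF₀_mem _) (hF₀_mem z)
      (pow_dvd_cosetSum_indicator_sub hβ hw hexp hh hK hA z)
  have := charSum_eq_zero_of_translate_eq hF₀_translate hh
  rw [charSum_cosetSum fun x hx ↦ ((hK x).1 hx).2, charSum_indicator_sub_smul] at this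
  exact sub_eq_zero.1 ((mul_eq_zero.1 this).resolve_left (by simp))

lemma exists_charSum_indicator_eq_intCast [CharZero E] (hβ : Function.Injective β) (hw : w ∈ P)
    (hexp : ∀ x ∈ P, x ^ p ^ (a + 1) = 1) (hcard : Nat.card P = p ^ (a + 1 + b)) {A : Set G}
    (hA : 1 ∉ A) {r : ℤ} (hr : ∀ h, ∃ t : ℤ, charSum β 𝟙[A] h = r + (p ^ (b + 1) : ℤ) * t) {h : G}
    (hh : β (w ^ p ^ a) h ≠ 1) :
    ∃ c : ℤ, charSum β 𝟙[A] h = c ∧ c ∈ Set.Ico (-p ^ b : ℤ) (p ^ b) ∧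
      (p ^ (b + 1) : ℤ) ∣ c - r := by
  classical
  let K : Subgroup G := P ⊓ (β.flip h).ker
  have hK (x : G) : x ∈ K ↔ x ∈ P ∧ β x h = 1 := Iff.rfl
  have hq : w ^ p ^ a ∉ K := fun hq ↦ hh ((hK _).1 hq).2
  have hK_card : (Fintype.card K : ℤ) = p ^ b :=
    mod_cast card_eq_pow_of_pow_ne_one hw hexp hcard hh hK
  let c := cosetSum K 𝟙[A] 1 - cosetSum K 𝟙[A] (w ^ p ^ a)
  have hc : (p ^ (b + 1) : ℤ) ∣ c - r := by
    have := pow_dvd_cosetSum_indicator_sub hβ hw hexp hh hK hr 1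
    rwa [one_mul, cosetSum_indicator_sub_smul, cosetSum_indicator_sub_smul,
      Set.indicator_of_notMem hq, Set.indicator_of_mem K.one_mem, dvd_sub_comm, mul_zero, mul_one,
      sub_zero, sub_right_comm] at this
  have hA_c (y : G) : ∃ t : ℤ, charSum β 𝟙[A] y = c + (p ^ (b + 1) : ℤ) * t := by
    obtain ⟨t, ht⟩ := hr y
    obtain ⟨u, hu⟩ := hc
    refine ⟨t - u, ?_⟩
    rw [ht, eq_add_of_sub_eq' hu]
    push_cast
    ring
  refine ⟨c, charSum_indicator_eq_cosetSum_sub hβ hw hexp hcard hh hK rfl hA_c, ⟨?_, ?_⟩, hc⟩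
  · linarith [cosetSum_indicator_nonneg K A 1, cosetSum_indicator_le_card K A (w ^ p ^ a)]
  · linarith [cosetSum_indicator_lt_card K hA, cosetSum_indicator_nonneg K A (w ^ p ^ a)]

lemma exists_charSum_indicator_eq_const [CharZero E] (hβ : Function.Injective β) (hw : w ∈ P)
    (hexp : ∀ x ∈ P, x ^ p ^ (a + 1) = 1) (hcard : Nat.card P = p ^ (a + 1 + b)) {A : Set G}
    (hA : 1 ∉ A) {r : ℤ} (hr : ∀ h, ∃ t : ℤ, charSum β 𝟙[A] h = r + (p ^ (b + 1) : ℤ) * t) :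
    ∃ c : ℤ, ∀ h, β (w ^ p ^ a) h ≠ 1 → charSum β 𝟙[A] h = c := by
  by_cases! hne : ∃ h, β (w ^ p ^ a) h ≠ 1
  · obtain ⟨h₀, hh₀⟩ := hne
    obtain ⟨c, -, hc_mem, hc⟩ :=
      exists_charSum_indicator_eq_intCast hβ hw hexp hcard hA hr hh₀
    refine ⟨c, fun h hh ↦ ?_⟩
    obtain ⟨c', hc'_eq, hc'_mem, hc'⟩ :=
      exists_charSum_indicator_eq_intCast hβ hw hexp hcard hA hr hh
    have hpow : (p ^ b + p ^ b : ℤ) ≤ p ^ (b + 1) := by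
      rw [← two_mul, pow_succ']
      gcongr
      exact_mod_cast (Fact.out : p.Prime).two_le
    have hsub : Set.Ico (-p ^ b : ℤ) (p ^ b) ⊆ Set.Ico (-p ^ b : ℤ) (-p ^ b + p ^ (b + 1)) :=
      Set.Ico_subset_Ico_right (by linarith)
    rw [hc'_eq, eq_of_dvd_sub_of_mem_Ico (hsub hc'_mem) (hsub hc_mem)]
    simpa only [sub_sub_sub_cancel_right] using dvd_sub hc' hc
  · exact ⟨0, fun h hh ↦ absurd (hne h) hh⟩

end Unbalanced

/-! ### Regular partial difference sets -/

section Indicator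

variable {G : Type*} {A : Set G}

lemma indicator_one_eq_zero_or_one (A : Set G) (x : G) : 𝟙[A] x = 0 ∨ 𝟙[A] x = 1 := by
  by_cases hx : x ∈ A <;> simp [hx]

lemma indicator_one_mul_self (A : Set G) (x : G) : 𝟙[A] x * 𝟙[A] x = 𝟙[A] x := by
  rcases indicator_one_eq_zero_or_one A x with hx | hx <;> simp [hx]

lemma eq_one_of_sum_indicator_mul_eq_sum [Fintype G] {f : G → ℤ} (hf : ∀ y, f y ≤ 1)
    (h : ∑ y, 𝟙[A] y * f y = ∑ y, 𝟙[A] y) {y : G} (hy : y ∈ A) : f y = 1 := by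
  have hle (y : G) : 𝟙[A] y * f y ≤ 𝟙[A] y := by
    rcases indicator_one_eq_zero_or_one A y with hy | hy <;> simp [hy, hf]
  simpa [hy] using (Finset.sum_eq_sum_iff_of_le fun y _ ↦ hle y).1 h y (Finset.mem_univ y)

end Indicator

/-- A regular partial difference set, through the autocorrelation of its indicator function. The
parameters are integers, so that those of the complementary partial difference set are given by
polynomial formulas without truncated subtraction. -/
structure IsRegularPartialDifferenceSet {G : Type*} [CommGroup G] [Fintype G] (D : Set G)
    (k lam mu : ℤ) : Prop where
  one_notMem : 1 ∉ D
  inv_mem : ∀ {g}, g ∈ D → g⁻¹ ∈ D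
  sum_indicator_mul : ∀ z, ∑ y, 𝟙[D] y * 𝟙[D] (z * y) =
    mu + (lam - mu) * 𝟙[D] z + (k - mu) * 𝟙[{1}] z

namespace IsRegularPartialDifferenceSet

variable {G : Type*} [CommGroup G] [Fintype G] {D : Set G} {k lam mu : ℤ}
  (hD : IsRegularPartialDifferenceSet D k lam mu)
include hD

lemma inv_mem_iff {g : G} : g⁻¹ ∈ D ↔ g ∈ D := ⟨fun hg ↦ inv_inv g ▸ hD.inv_mem hg, hD.inv_mem⟩

lemma indicator_inv (g : G) : 𝟙[D] g⁻¹ = 𝟙[D] g := by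
  by_cases hg : g ∈ D <;> simp [hD.inv_mem_iff, hg]

lemma sum_indicator : ∑ y, 𝟙[D] y = k := by
  have h := hD.sum_indicator_mul 1
  simp only [one_mul, indicator_one_mul_self] at h
  simp [h, hD.one_notMem]

lemma mul_mem_of_eq (hk : k = mu) {z y : G} (hz : z ∉ D) (hy : y ∈ D) : z * y ∈ D := by
  have hsum : ∑ y, 𝟙[D] y * 𝟙[D] (z * y) = ∑ y, 𝟙[D] y := by
    rw [hD.sum_indicator_mul, hD.sum_indicator]
    simp [hz, hk]
  by_contra h
  have := eq_one_of_sum_indicator_mul_eq_sum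
    (fun y ↦ Set.indicator_le_self' (fun _ _ ↦ zero_le_one) (z * y)) hsum hy
  simp [h] at this

lemma isTrivialPDS_of_eq (hk : k = mu) : IsTrivialPDS D := by
  refine Or.inr ⟨⟨⟨⟨Dᶜ, fun {x y} hx hy hxy ↦ hx ?_⟩, hD.one_notMem⟩, ?_⟩, rfl⟩
  · rw [← mul_inv_cancel_right x y, mul_comm]
    exact hD.mul_mem_of_eq hk (mt hD.inv_mem_iff.1 hy) hxy
  · exact fun {x} hx ↦ mt hD.inv_mem_iff.1 hx

lemma eq_zero_of_subset {M : Subgroup G} (hDM : D ⊆ M) (hM : M ≠ ⊤) : mu = 0 := by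
  obtain ⟨z, hz⟩ : ∃ z, z ∉ M := by simpa [Subgroup.eq_top_iff'] using hM
  have hsum : ∑ y, 𝟙[D] y * 𝟙[D] (z * y) = 0 := by
    refine Finset.sum_eq_zero fun y _ ↦ ?_
    by_cases hy : y ∈ D
    · have : z * y ∉ D := fun hzy ↦ hz ((M.mul_mem_cancel_right (hDM hy)).1 (hDM hzy))
      rw [Set.indicator_of_notMem this, mul_zero]
    · rw [Set.indicator_of_notMem hy, zero_mul]
  have hz_one : z ∉ ({1} : Set G) := fun h ↦ hz (h ▸ M.one_mem)
  rw [hD.sum_indicator_mul, Set.indicator_of_notMem (mt (@hDM z) hz),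
    Set.indicator_of_notMem hz_one] at hsum
  simpa using hsum

lemma mul_mem_union_of_eq_zero (hmu : mu = 0) {x y : G} (hx : x ∈ D) (hy : y ∈ D) :
    x * y ∈ D ∪ {1} := by
  by_contra! hxy
  obtain ⟨hxy_mem, hxy_one⟩ := not_or.1 hxy
  have hsum := hD.sum_indicator_mul (x * y)
  rw [Set.indicator_of_notMem hxy_mem, Set.indicator_of_notMem hxy_one, hmu, mul_zero, mul_zero,
    add_zero, add_zero, Finset.sum_eq_zero_iff_of_nonneg fun z _ ↦ mul_nonneg
      (Set.indicator_nonneg (fun _ _ ↦ zero_le_one) _)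
      (Set.indicator_nonneg (fun _ _ ↦ zero_le_one) _)] at hsum
  simpa [hx, hD.inv_mem hy] using hsum y⁻¹ (Finset.mem_univ _)

lemma isTrivialPDS_of_subset {M : Subgroup G} (hDM : D ⊆ M) (hM : M ≠ ⊤) : IsTrivialPDS D := by
  refine Or.inl ⟨⟨⟨⟨D ∪ {1}, ?_⟩, Or.inr rfl⟩, ?_⟩, rfl⟩
  · rintro x y (hx | rfl) (hy | rfl)
    · exact hD.mul_mem_union_of_eq_zero (hD.eq_zero_of_subset hDM hM) hx hy
    · exact Or.inl (by rwa [mul_one])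
    · exact Or.inl (by rwa [one_mul])
    · exact Or.inr (mul_one 1)
  · rintro x (hx | rfl)
    · exact Or.inl (hD.inv_mem hx)
    · exact Or.inr inv_one

lemma indicator_compl_union_one (x : G) : 𝟙[(D ∪ {1})ᶜ] x = 1 - 𝟙[D] x - 𝟙[{1}] x := by
  rcases eq_or_ne x 1 with rfl | hx
  · simp [hD.one_notMem]
  · by_cases hxD : x ∈ D <;> simp [hx, hxD]

lemma compl : IsRegularPartialDifferenceSet (D ∪ {1})ᶜ (Fintype.card G - k - 1)
    (Fintype.card G - 2 * k + mu - 2) (Fintype.card G - 2 * k + lam) where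
  one_notMem h := h (Or.inr rfl)
  inv_mem := by simp [hD.inv_mem_iff]
  sum_indicator_mul z := by
    classical
    have hD_translate : ∑ y, 𝟙[D] (z * y) = k := by
      rw [← hD.sum_indicator]
      exact Equiv.sum_comp (Equiv.mulLeft z) 𝟙[D]
    have hone (f : G → ℤ) : ∑ y, 𝟙[{1}] y * f y = f 1 := by
      rw [Finset.sum_eq_single 1] <;> simp +contextual
    have hone_translate (f : G → ℤ) : ∑ y, f y * 𝟙[{1}] (z * y) = f z⁻¹ := by
      rw [Finset.sum_eq_single z⁻¹] <;> simp +contextual [mul_eq_one_iff_inv_eq, eq_comm]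
    have hone_sum := hone 1
    have hone_translate_sum := hone_translate 1
    have hinv : 𝟙[{1}] z⁻¹ = 𝟙[{1}] z := by by_cases hz : z = 1 <;> simp [hz]
    simp only [Pi.one_apply, mul_one, one_mul] at hone_sum hone_translate_sum
    simp only [hD.indicator_compl_union_one, mul_sub, sub_mul, one_mul, mul_one,
      Finset.sum_sub_distrib, hD_translate, hD.sum_indicator, hD.sum_indicator_mul, hone_sum,
      hone_translate_sum, hone_translate, hone fun y ↦ 𝟙[D] (z * y), hinv, hD.indicator_inv,
      Finset.sum_const, Finset.card_univ, nsmul_eq_mul]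
    ring

lemma isTrivialPDS_of_compl (h : IsTrivialPDS (D ∪ {1})ᶜ) : IsTrivialPDS D := by
  rw [IsTrivialPDS, compl_compl, Set.compl_union, Set.inter_union_distrib_right,
    Set.compl_union_self, Set.inter_univ, Set.union_eq_self_of_subset_right
      (Set.singleton_subset_iff.2 hD.one_notMem)] at h
  exact h.symm

lemma isTrivialPDS_of_eq_sub_one (hk : lam = k - 1) : IsTrivialPDS D :=
  hD.isTrivialPDS_of_compl (hD.compl.isTrivialPDS_of_eq (by rw [hk]; ring))

lemma isTrivialPDS_of_compl_subset {M : Subgroup G} (hDM : (M : Set G)ᶜ ⊆ D) (hM : M ≠ ⊤) :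
    IsTrivialPDS D :=
  hD.isTrivialPDS_of_compl <| hD.compl.isTrivialPDS_of_subset (M := M)
    (Set.compl_subset_comm.1 (hDM.trans Set.subset_union_left)) hM

lemma isTrivialPDS_of_forall_notMem_imp {M : Subgroup G} (hM : M ≠ ⊤)
    (hMD : ∀ g ∉ M, ∀ g' ∉ M, g ∈ D → g' ∈ D) : IsTrivialPDS D := by
  by_cases hDM : D ⊆ M
  · exact hD.isTrivialPDS_of_subset hDM hM
  · obtain ⟨g, hg, hgM⟩ := Set.not_subset.1 hDM
    exact hD.isTrivialPDS_of_compl_subset (fun g' hg' ↦ hMD g hgM g' hg' hg) hM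

end IsRegularPartialDifferenceSet

section Duality

variable {G E : Type*} [CommGroup G] [Field E]

lemma bichar_inv_left (β : G →* G →* E) (x y : G) : β x⁻¹ y = β x y⁻¹ := by
  refine mul_right_cancel₀ (bichar_ne_zero β x y) ?_
  rw [bichar_inv_mul, ← map_mul, inv_mul_cancel, map_one]

variable [Fintype G] {β : G →* G →* E}

lemma charSum_const_one [DecidableEq G] (hβ : Function.Injective β.flip) (h : G) :
    charSum β 1 h = if h = 1 then (Fintype.card G : E) else 0 := by
  simp [charSum_apply, ← sum_bichar β.flip hβ h]

lemma charSum_correlation (f g : G → ℤ) (h : G) :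
    charSum β (fun z ↦ ∑ y, f y * g (z * y)) h = charSum β f h⁻¹ * charSum β g h := by
  calc charSum β (fun z ↦ ∑ y, f y * g (z * y)) h
      = ∑ y, (f y : E) * charSum β (fun z ↦ g (y * z)) h := by
        simp only [charSum_apply, Int.cast_sum, Int.cast_mul, Finset.sum_mul, Finset.mul_sum,
          mul_assoc]
        rw [Finset.sum_comm]
        simp only [mul_comm (_ : G)]
    _ = charSum β f h⁻¹ * charSum β g h := by
        simp only [charSum_translate, charSum_apply β f, Finset.sum_mul, bichar_inv_left, mul_assoc]

lemma charSum_inv {f : G → ℤ} (hf : ∀ x, f x⁻¹ = f x) (h : G) :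
    charSum β f h⁻¹ = charSum β f h := by
  simp only [charSum_apply, ← bichar_inv_left]
  exact Fintype.sum_equiv (Equiv.inv G) _ _ fun x ↦ by rw [Equiv.inv_apply, hf]

variable [CharZero E]

lemma sub_eq_of_charSum_eq_const (hβ : Function.Injective β) {f : G → ℤ} {c : ℤ}
    {q : G} (hq : q ≠ 1) (hf : ∀ h, β q h ≠ 1 → charSum β f h = c) : f 1 - f q = c := by
  let f₀ : G → ℤ := f - c • 𝟙[{1}]
  have htranslate : charSum β (fun x ↦ f₀ (q * x)) = charSum β f₀ := by
    ext h
    rw [charSum_translate]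
    by_cases hh : β q h = 1
    · have := bichar_inv_mul β q h
      rw [hh, mul_one] at this
      rw [this, one_mul]
    · have : charSum β f₀ h = 0 := by
        simp only [f₀, map_sub, map_zsmul, Pi.sub_apply, Pi.smul_apply, charSum_indicator_one,
          zsmul_one, hf h hh, sub_self]
      rw [this, mul_zero]
  have := congrFun (charSum_injective β hβ htranslate) 1
  simp only [f₀, Pi.sub_apply, Pi.smul_apply, mul_one, Set.indicator, Set.mem_singleton_iff, hq,
    if_true, if_false, smul_eq_mul] at this
  linarith

lemma dvd_of_isIntegral_of_eq_mul {E : Type*} [Field E] [CharZero E] {m n : ℤ} {t : E} (hm : m ≠ 0)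
    (ht : IsIntegral ℤ t) (h : (n : E) = m * t) : m ∣ n := by
  have ht_eq : t = algebraMap ℚ E (n / m) := by
    rw [map_div₀, map_intCast, map_intCast, h, mul_div_cancel_left₀ _ (Int.cast_ne_zero.2 hm)]
  rw [ht_eq, isIntegral_algebraMap_iff (algebraMap ℚ E).injective] at ht
  obtain ⟨y, hy⟩ := IsIntegrallyClosed.isIntegral_iff.1 ht
  rw [algebraMap_int_eq, eq_intCast, eq_div_iff (Int.cast_ne_zero.2 hm)] at hy
  exact ⟨y, by rw [mul_comm]; exact_mod_cast hy.symm⟩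

end Duality

section TwoValued

variable {G E : Type*} [CommGroup G] [Fintype G] [Field E] {β : G →* G →* E} {A : Set G} {θ θ' : ℤ}

/-- The dual of a set `A` whose character sums take the value `θ` and one further value away from
the trivial character. -/
def dualSet (β : G →* G →* E) (A : Set G) (θ : ℤ) : Set G := {h | h ≠ 1 ∧ charSum β 𝟙[A] h ≠ θ}

lemma one_notMem_dualSet : 1 ∉ dualSet β A θ := fun h ↦ h.1 rfl

lemma charSum_eq_add_mul_dualSet (hA : ∀ h ≠ 1, charSum β 𝟙[A] h = θ ∨ charSum β 𝟙[A] h = θ')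
    (h : G) : charSum β 𝟙[A] h = θ + ((θ' - θ) * 𝟙[dualSet β A θ] h +
      (∑ y, 𝟙[A] y - θ) * 𝟙[{1}] h : ℤ) := by
  rcases eq_or_ne h 1 with rfl | hh
  · simp [one_notMem_dualSet, charSum_one]
  · by_cases hθ : charSum β 𝟙[A] h = θ
    · simp [hh, hθ, dualSet]
    · have hmem : h ∈ dualSet β A θ := ⟨hh, hθ⟩
      simp [hh, hmem, (hA h hh).resolve_left hθ]

-- Fourier inversion for `𝟙[A] - θ • 𝟙[{1}]`.
lemma mul_charSum_dualSet_add (hβ : Function.Injective β)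
    (hA : ∀ h ≠ 1, charSum β 𝟙[A] h = θ ∨ charSum β 𝟙[A] h = θ') (g : G) :
    (θ' - θ) * charSum β.flip 𝟙[dualSet β A θ] g⁻¹ + (∑ y, 𝟙[A] y - θ : ℤ) =
      Fintype.card G * (𝟙[A] g - θ * 𝟙[{1}] g : ℤ) := by
  let N : G → ℤ := (θ' - θ) • 𝟙[dualSet β A θ] + (∑ y, 𝟙[A] y - θ) • 𝟙[{1}]
  calc (θ' - θ) * charSum β.flip 𝟙[dualSet β A θ] g⁻¹ + (∑ y, 𝟙[A] y - θ : ℤ)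
      = charSum β.flip N g⁻¹ := by
        simp only [N, map_add, map_zsmul, Pi.add_apply, Pi.smul_apply, charSum_indicator_one]
        simp only [zsmul_eq_mul, mul_one, Int.cast_sub]
    _ = ∑ h, charSum β (𝟙[A] - θ • 𝟙[{1}]) h * β g⁻¹ h := by
        simp only [charSum_indicator_sub_smul, charSum_eq_add_mul_dualSet hA, add_sub_cancel_left]
        rfl
    _ = Fintype.card G * (𝟙[A] g - θ * 𝟙[{1}] g : ℤ) := sum_charSum_mul_bichar β hβ _ g

lemma exists_charSum_dualSet [CharZero E] (hβ : Function.Injective β)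
    (hA : ∀ h ≠ 1, charSum β 𝟙[A] h = θ ∨ charSum β 𝟙[A] h = θ') {g₀ g₁ : G} (hg₀ : g₀ ∈ A)
    (hg₀' : g₀ ≠ 1) (hg₁ : g₁ ∉ A) (hg₁' : g₁ ≠ 1) :
    ∃ e δ : ℤ, (θ' - θ) * δ = Fintype.card G ∧
      (∀ h, charSum β 𝟙[A] h = θ + (θ' - θ) * (𝟙[dualSet β A θ] h + e * 𝟙[{1}] h : ℤ)) ∧
      ∀ g, charSum β.flip 𝟙[dualSet β A θ] g⁻¹ = -e + δ * (𝟙[A] g - θ * 𝟙[{1}] g : ℤ) := by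
  have hinv := mul_charSum_dualSet_add hβ hA
  have hint (g : G) := isIntegral_charSum (β := β.flip) 𝟙[dualSet β A θ] g⁻¹
  have hcard : (Fintype.card G : E) ≠ 0 := Nat.cast_ne_zero.2 Fintype.card_ne_zero
  have h₀ := hinv g₀
  have h₁ := hinv g₁
  rw [Set.indicator_of_mem hg₀, Set.indicator_of_notMem (Set.mem_singleton_iff.not.2 hg₀'),
    mul_zero, sub_zero, Int.cast_one, mul_one] at h₀
  rw [Set.indicator_of_notMem hg₁, Set.indicator_of_notMem (Set.mem_singleton_iff.not.2 hg₁'),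
    mul_zero, sub_zero, Int.cast_zero, mul_zero] at h₁
  have hθ : θ' - θ ≠ 0 := fun hθ ↦ hcard <| by
    have hθ : (θ' - θ : E) = 0 := by exact_mod_cast congrArg (Int.cast : ℤ → E) hθ
    linear_combination h₁ - h₀ + hθ * (charSum β.flip 𝟙[dualSet β A θ] g₀⁻¹ -
      charSum β.flip 𝟙[dualSet β A θ] g₁⁻¹)
  obtain ⟨e, he⟩ : θ' - θ ∣ ∑ y, 𝟙[A] y - θ :=
    dvd_of_isIntegral_of_eq_mul hθ (hint g₁).neg (by push_cast at h₁ ⊢; linear_combination h₁)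
  obtain ⟨δ, hδ⟩ : θ' - θ ∣ Fintype.card G :=
    dvd_of_isIntegral_of_eq_mul hθ ((hint g₀).sub (hint g₁))
      (by push_cast at h₀ h₁ ⊢; linear_combination h₁ - h₀)
  refine ⟨e, δ, hδ.symm, fun h ↦ ?_, fun g ↦ ?_⟩
  · rw [charSum_eq_add_mul_dualSet hA, he]
    push_cast
    ring
  · have hδ' : (Fintype.card G : E) = (θ' - θ) * δ := by
      exact_mod_cast congrArg (Int.cast : ℤ → E) hδ
    refine mul_left_cancel₀ (a := (θ' - θ : E)) (by exact_mod_cast hθ) ?_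
    have := hinv g
    rw [he, hδ'] at this
    push_cast at this ⊢
    linear_combination this

end TwoValued

/-! ### Square discriminant -/

section SquareDiscriminant

lemma pow_succ_dvd_or_of_pow_dvd_mul {p m n : ℕ} (hp : p.Prime) {x y : ℤ}
    (h : (p ^ (m + n + 1) : ℤ) ∣ x * y) : (p ^ (m + 1) : ℤ) ∣ x ∨ (p ^ (n + 1) : ℤ) ∣ y := by
  have hp := Nat.prime_iff_prime_int.1 hp
  rw [pow_dvd_iff_le_emultiplicity, emultiplicity_mul hp] at h
  simp only [pow_dvd_iff_le_emultiplicity]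
  by_contra! hlt
  have hx : emultiplicity (p : ℤ) x ≤ m := Order.le_of_lt_add_one (by exact_mod_cast hlt.1)
  have hy : emultiplicity (p : ℤ) y ≤ n := Order.le_of_lt_add_one (by exact_mod_cast hlt.2)
  exact absurd (h.trans (add_le_add hx hy)) (by norm_cast; omega)

namespace IsRegularPartialDifferenceSet

variable {G E : Type*} [CommGroup G] [Fintype G] [Field E] {β : G →* G →* E} {D : Set G}
  {k lam mu : ℤ} (hD : IsRegularPartialDifferenceSet D k lam mu)
include hD

lemma charSum_sq (h : G) : charSum β 𝟙[D] h ^ 2 =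
    (k - mu) + (lam - mu) * charSum β 𝟙[D] h + mu * charSum β 1 h := by
  have hcorr : (fun z ↦ ∑ y, 𝟙[D] y * 𝟙[D] (z * y)) =
      mu • (1 : G → ℤ) + (lam - mu) • 𝟙[D] + (k - mu) • 𝟙[{1}] := by
    ext z
    simp [hD.sum_indicator_mul]
  rw [sq]
  nth_rw 1 [← charSum_inv hD.indicator_inv]
  rw [← charSum_correlation, hcorr]
  simp only [map_add, map_zsmul, Pi.add_apply, Pi.smul_apply, charSum_indicator_one]
  simp only [zsmul_eq_mul, Int.cast_sub]
  ring

lemma charSum_sq_of_ne_one (hβ : Function.Injective β.flip) {h : G} (hh : h ≠ 1) :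
    charSum β 𝟙[D] h ^ 2 = (k - mu) + (lam - mu) * charSum β 𝟙[D] h := by
  classical
  rw [hD.charSum_sq, charSum_const_one hβ, if_neg hh, mul_zero, add_zero]

lemma charSum_eq_or_eq (hβ : Function.Injective β.flip) {θ θ' : ℤ} (hadd : θ + θ' = lam - mu)
    (hmul : θ * θ' = mu - k) {h : G} (hh : h ≠ 1) :
    charSum β 𝟙[D] h = θ ∨ charSum β 𝟙[D] h = θ' := by
  have hadd : (θ + θ' : E) = lam - mu := by exact_mod_cast congrArg (Int.cast : ℤ → E) hadd
  have hmul : (θ * θ' : E) = mu - k := by exact_mod_cast congrArg (Int.cast : ℤ → E) hmul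
  rw [← sub_eq_zero, ← sub_eq_zero (b := (θ' : E)), ← mul_eq_zero]
  linear_combination hD.charSum_sq_of_ne_one hβ hh - charSum β 𝟙[D] h * hadd + hmul

variable [CharZero E]

lemma isTrivialPDS_of_charSum_eq_const (hβ : Function.Injective β)
    (hβ' : Function.Injective β.flip) {q : G} (hq : q ≠ 1) {c : ℤ}
    (hc : ∀ h, β q h ≠ 1 → charSum β 𝟙[D] h = c) : IsTrivialPDS D := by
  obtain ⟨h, hh⟩ := exists_bichar_ne_one hβ hq
  have hh_one : h ≠ 1 := fun h_one ↦ hh (by rw [h_one, map_one])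
  have hc_sq := hD.charSum_sq_of_ne_one hβ' hh_one
  rw [hc h hh] at hc_sq
  replace hc_sq : c ^ 2 = (k - mu) + (lam - mu) * c := by exact_mod_cast hc_sq
  have hc_eq := sub_eq_of_charSum_eq_const hβ hq hc
  rw [Set.indicator_of_notMem hD.one_notMem] at hc_eq
  rcases indicator_one_eq_zero_or_one D q with hDq | hDq <;> rw [hDq] at hc_eq <;> subst hc_eq
  · exact hD.isTrivialPDS_of_eq (by linarith)
  · exact hD.isTrivialPDS_of_eq_sub_one (by linarith)

variable {p : ℕ} [Fact p.Prime] {P : Sylow p G} {a b : ℕ} {w : G}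

lemma isTrivialPDS_of_roots (hβ : Function.Injective β) (hβ' : Function.Injective β.flip)
    (hw : w ∈ P) (hw_pow : w ^ p ^ a ≠ 1) (hexp : ∀ x ∈ P, x ^ p ^ (a + 1) = 1)
    (hcard : Nat.card P = p ^ (a + 1 + b)) (hab : b ≤ a) {θ θ' : ℤ} (hadd : θ + θ' = lam - mu)
    (hmul : θ * θ' = mu - k) {g₀ g₁ : G} (hg₀ : g₀ ∈ D) (hg₁ : g₁ ∉ D) (hg₁' : g₁ ≠ 1) :
    IsTrivialPDS D := by
  obtain ⟨e, δ, hδ, hD_eq, hdual_eq⟩ := exists_charSum_dualSet hβ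
    (fun h hh ↦ hD.charSum_eq_or_eq hβ' hadd hmul hh) hg₀ (ne_of_mem_of_not_mem hg₀ hD.one_notMem)
    hg₁ hg₁'
  have hdvd : (p ^ (b + b + 1) : ℤ) ∣ (θ' - θ) * δ := by
    rw [hδ, ← Nat.card_eq_fintype_card]
    have := hcard ▸ Subgroup.card_subgroup_dvd_card (P : Subgroup G)
    exact_mod_cast (pow_dvd_pow p (by omega)).trans this
  rcases pow_succ_dvd_or_of_pow_dvd_mul Fact.out hdvd with ⟨u, hu⟩ | ⟨u, hu⟩
  · obtain ⟨c, hc⟩ := exists_charSum_indicator_eq_const hβ hw hexp hcard hD.one_notMem (r := θ)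
      fun h ↦ ⟨u * (𝟙[dualSet β D θ] h + e * 𝟙[{1}] h), by
        rw [hD_eq, ← Int.cast_sub, hu]; push_cast; ring⟩
    exact hD.isTrivialPDS_of_charSum_eq_const hβ hβ' hw_pow hc
  · obtain ⟨c, hc⟩ := exists_charSum_indicator_eq_const (A := dualSet β D θ) hβ' hw hexp hcard
      one_notMem_dualSet (r := -e) fun g ↦ ⟨u * (𝟙[D] g⁻¹ - θ * 𝟙[{1}] g⁻¹), by
        rw [← inv_inv g, hdual_eq, hu, inv_inv]; push_cast; ring⟩
    have hM : (β.flip (w ^ p ^ a)).ker ≠ ⊤ := fun hM ↦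
      hw_pow ((map_eq_one_iff _ hβ').1 (MonoidHom.ker_eq_top_iff.1 hM))
    have hδ_ne : δ ≠ 0 := right_ne_zero_of_mul (hδ ▸ Nat.cast_ne_zero.2 Fintype.card_ne_zero)
    have hδ_mul (g : G) (hg : g ∉ (β.flip (w ^ p ^ a)).ker) : δ * 𝟙[D] g = c + e := by
      have hg_one : g ∉ ({1} : Set G) := fun h ↦ hg (h ▸ Subgroup.one_mem _)
      have := hdual_eq g
      rw [hc _ (mt (_root_.inv_mem_iff (H := (β.flip (w ^ p ^ a)).ker)).1 hg),
        Set.indicator_of_notMem hg_one] at this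
      have : (δ * 𝟙[D] g : E) = c + e := by push_cast at this; linear_combination -this
      exact_mod_cast this
    refine hD.isTrivialPDS_of_forall_notMem_imp hM fun g hg g' hg' hgD ↦ ?_
    have := mul_left_cancel₀ hδ_ne ((hδ_mul g hg).trans (hδ_mul g' hg').symm)
    by_contra hg'D
    simp [hgD, hg'D] at this

lemma isTrivialPDS_of_isSquare (hβ : Function.Injective β) (hβ' : Function.Injective β.flip)
    (hw : w ∈ P) (hw_pow : w ^ p ^ a ≠ 1) (hexp : ∀ x ∈ P, x ^ p ^ (a + 1) = 1)
    (hcard : Nat.card P = p ^ (a + 1 + b)) (hab : b ≤ a)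
    (hΔ : IsSquare ((lam - mu) ^ 2 + 4 * (k - mu))) {g₀ g₁ : G} (hg₀ : g₀ ∈ D) (hg₁ : g₁ ∉ D)
    (hg₁' : g₁ ≠ 1) : IsTrivialPDS D := by
  obtain ⟨δ, hδ⟩ := hΔ
  obtain ⟨θ, hθ⟩ : Even (lam - mu + δ) := by
    have : Even ((lam - mu) ^ 2 + δ ^ 2) := ⟨δ ^ 2 - 2 * (k - mu), by linarith⟩
    simpa [Int.even_add, Int.even_pow] using this
  refine hD.isTrivialPDS_of_roots hβ hβ' hw hw_pow hexp hcard hab (θ := θ) (θ' := θ - δ)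
    (by linarith) ?_ hg₀ hg₁ hg₁'
  obtain rfl : δ = θ + θ - (lam - mu) := by linarith
  linarith

end IsRegularPartialDifferenceSet

end SquareDiscriminant

/-! ### Nonsquare discriminant -/

section NonsquareDiscriminant

lemma eq_zero_of_eq_mul_of_sq_eq {E : Type*} [Field E] [CharZero E] {Δ m n : ℤ}
    (hΔ : ¬ IsSquare Δ) {r : E} (hr : r ^ 2 = Δ) (h : (n : E) = m * r) : n = 0 := by
  have hsq : n ^ 2 = m ^ 2 * Δ := by
    have : (n : E) ^ 2 = m ^ 2 * Δ := by rw [h, mul_pow, hr]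
    exact_mod_cast this
  by_contra hn
  obtain ⟨c, rfl⟩ : m ∣ n := (Int.pow_dvd_pow_iff two_ne_zero).1 (Dvd.intro _ hsq.symm)
  have hm : m ^ 2 ≠ 0 := pow_ne_zero 2 (left_ne_zero_of_mul hn)
  exact hΔ ⟨c, mul_left_cancel₀ hm (by linear_combination -hsq)⟩

variable {G E : Type*} [CommGroup G] [Fintype G] [Field E] {β : G →* G →* E}

lemma charSum_two_smul_sub (A : Set G) (c : ℤ) (h : G) :
    charSum β (2 • 𝟙[A] - c • 𝟙[{1}]) h = 2 * charSum β 𝟙[A] h - c := by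
  simp only [map_sub, map_nsmul, map_zsmul, Pi.sub_apply, Pi.smul_apply, charSum_indicator_one]
  simp only [nsmul_eq_mul, zsmul_eq_mul, Nat.cast_ofNat, mul_one]

lemma IsRegularPartialDifferenceSet.charSum_two_smul_sub_sq {D : Set G} {k lam mu : ℤ}
    (hD : IsRegularPartialDifferenceSet D k lam mu) (hβ : Function.Injective β.flip) {h : G}
    (hh : h ≠ 1) :
    charSum β (2 • 𝟙[D] - (lam - mu) • 𝟙[{1}]) h ^ 2 = ((lam - mu) ^ 2 + 4 * (k - mu) : ℤ) := by
  rw [charSum_two_smul_sub]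
  push_cast
  linear_combination 4 * hD.charSum_sq_of_ne_one hβ hh

/-- A function on `G` behaving like the quadratic character of a finite field: it vanishes at the
identity, takes the values `±1` elsewhere, and its nontrivial character sums are square roots of
`|G|`, which is not a perfect square. It stands for the function that is `1` on `D` and `-1` off
`D ∪ {1}`, where `D` is a partial difference set of Paley type. -/
structure IsPaleyFunction (β : G →* G →* E) (f : G → ℤ) : Prop where
  map_one : f 1 = 0
  eq_or_eq_neg {g : G} : g ≠ 1 → f g = 1 ∨ f g = -1
  charSum_one : charSum β f 1 = 0
  charSum_sq {h : G} : h ≠ 1 → charSum β f h ^ 2 = Fintype.card G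
  not_isSquare_card : ¬ IsSquare (Fintype.card G : ℤ)

namespace IsPaleyFunction

variable {f : G → ℤ} (hf : IsPaleyFunction β f)
include hf

lemma ne_zero {g : G} (hg : g ≠ 1) : f g ≠ 0 := by
  rcases hf.eq_or_eq_neg hg with h | h <;> simp [h]

lemma sq_eq_one {g : G} (hg : g ≠ 1) : f g ^ 2 = 1 :=
  sq_eq_one_iff.2 (hf.eq_or_eq_neg hg)

lemma nontrivial : Nontrivial G := by
  by_contra h
  have hcard := Fintype.card_le_one_iff_subsingleton.2 (not_nontrivial_iff_subsingleton.1 h)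
  exact hf.not_isSquare_card (by simp [hcard.antisymm Fintype.card_pos])

end IsPaleyFunction

variable [CharZero E]

lemma sum_eq_card_mul_of_charSum_sq_eq [Nontrivial G] (hβ : Function.Injective β) {Δ : ℤ}
    (hΔ : ¬ IsSquare Δ) {f : G → ℤ} (hf : ∀ h ≠ 1, charSum β f h ^ 2 = Δ) :
    ∑ x, f x = Fintype.card G * f 1 := by
  classical
  obtain ⟨h₀, hh₀⟩ := exists_ne (1 : G)
  have hε (h : G) (hh : h ≠ 1) : ∃ ε : ℤ, charSum β f h = ε * charSum β f h₀ := by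
    rcases sq_eq_sq_iff_eq_or_eq_neg.1 ((hf h hh).trans (hf h₀ hh₀).symm) with h | h
    · exact ⟨1, by rw [h, Int.cast_one, one_mul]⟩
    · exact ⟨-1, by rw [h, Int.cast_neg, Int.cast_one, neg_one_mul]⟩
  choose! ε hε using hε
  have hsum := sum_charSum_mul_bichar β hβ f 1
  simp only [inv_one, map_one, MonoidHom.one_apply, mul_one] at hsum
  rw [← Finset.add_sum_erase _ _ (Finset.mem_univ 1), charSum_one,
    Finset.sum_congr rfl fun h hh ↦ hε h (Finset.ne_of_mem_erase hh), ← Finset.sum_mul] at hsum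
  refine (sub_eq_zero.1 (eq_zero_of_eq_mul_of_sq_eq hΔ (hf h₀ hh₀)
    (m := ∑ h ∈ Finset.univ.erase 1, ε h) ?_)).symm
  push_cast at hsum ⊢
  linear_combination -hsum

namespace IsRegularPartialDifferenceSet

variable {D : Set G} {k lam mu : ℤ} (hD : IsRegularPartialDifferenceSet D k lam mu)
include hD

lemma pos_of_mem {g : G} (hg : g ∈ D) : 0 < k := by
  rw [← hD.sum_indicator]
  exact Finset.sum_pos' (fun x _ ↦ Set.indicator_nonneg (fun _ _ ↦ zero_le_one) x)
    ⟨g, Finset.mem_univ _, by rw [Set.indicator_of_mem hg]; exact one_pos⟩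

lemma sub_eq_neg_one_of_two_mul_eq (hk : 2 * k = (mu - lam) * (Fintype.card G - 1)) {g₀ g₁ : G}
    (hg₀ : g₀ ∈ D) (hg₁ : g₁ ∉ D) (hg₁' : g₁ ≠ 1) : lam - mu = -1 := by
  have hk_pos := hD.pos_of_mem hg₀
  have hk_compl_pos := hD.compl.pos_of_mem (g := g₁) (by simp [hg₁, hg₁'])
  have hpos : 0 < mu - lam := pos_of_mul_pos_left (b := (Fintype.card G - 1 : ℤ))
    (by linarith) (by linarith)
  have hlt : mu - lam < 2 := lt_of_mul_lt_mul_right (a := (Fintype.card G - 1 : ℤ))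
    (by linarith) (by linarith)
  linarith

lemma parameters_of_not_isSquare (hβ : Function.Injective β) (hβ' : Function.Injective β.flip)
    (hΔ : ¬ IsSquare ((lam - mu) ^ 2 + 4 * (k - mu))) {g₀ g₁ : G} (hg₀ : g₀ ∈ D) (hg₁ : g₁ ∉ D)
    (hg₁' : g₁ ≠ 1) : lam - mu = -1 ∧ k = 2 * mu ∧ (Fintype.card G : ℤ) = 2 * k + 1 := by
  classical
  have : Nontrivial G := ⟨g₁, 1, hg₁'⟩
  have hk : 2 * k = (mu - lam) * (Fintype.card G - 1) := by
    have hsum := charSum_two_smul_sub (β := β) D (lam - mu) 1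
    rw [charSum_one, charSum_one, hD.sum_indicator, sum_eq_card_mul_of_charSum_sq_eq hβ hΔ
      fun h hh ↦ hD.charSum_two_smul_sub_sq hβ' hh] at hsum
    have hf_one : (2 • 𝟙[D] - (lam - mu) • 𝟙[{1}] : G → ℤ) 1 = mu - lam := by simp [hD.one_notMem]
    rw [hf_one] at hsum
    have hsum : Fintype.card G * (mu - lam) = 2 * k - (lam - mu) := by exact_mod_cast hsum
    linarith
  have hlam := hD.sub_eq_neg_one_of_two_mul_eq hk hg₀ hg₁ hg₁'
  have hcard : (Fintype.card G : ℤ) = 2 * k + 1 := by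
    linear_combination (Fintype.card G - 1) * hlam - hk
  refine ⟨hlam, mul_left_cancel₀ (hD.pos_of_mem hg₀).ne' ?_, hcard⟩
  have hsq := hD.charSum_sq (β := β) 1
  rw [charSum_const_one hβ', if_pos rfl, charSum_one, hD.sum_indicator] at hsq
  have hsq : k ^ 2 = (k - mu) + (lam - mu) * k + mu * Fintype.card G := by exact_mod_cast hsq
  linear_combination hsq + k * hlam + mu * hcard

theorem isPaleyFunction (hβ : Function.Injective β) (hβ' : Function.Injective β.flip)
    (hΔ : ¬ IsSquare ((lam - mu) ^ 2 + 4 * (k - mu))) {g₀ g₁ : G} (hg₀ : g₀ ∈ D) (hg₁ : g₁ ∉ D)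
    (hg₁' : g₁ ≠ 1) : IsPaleyFunction β (2 • 𝟙[D] - 1 + 𝟙[{1}]) := by
  classical
  obtain ⟨hlam, hk, hcard⟩ := hD.parameters_of_not_isSquare hβ hβ' hΔ hg₀ hg₁ hg₁'
  have hΔ_eq : (lam - mu) ^ 2 + 4 * (k - mu) = Fintype.card G := by
    rw [hlam]
    linarith
  have hf : 2 • 𝟙[D] - 1 + 𝟙[{1}] = 2 • 𝟙[D] - (lam - mu) • 𝟙[{1}] - 1 := by
    rw [hlam, neg_one_zsmul, sub_neg_eq_add, sub_add_eq_add_sub]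
  refine ⟨by simp [hD.one_notMem], fun {g} hg ↦ ?_, ?_, fun hh ↦ ?_, hΔ_eq ▸ hΔ⟩
  · rcases indicator_one_eq_zero_or_one D g with h | h <;> simp [h, hg]
  · have hsum : 2 * k - (lam - mu) - Fintype.card G = 0 := by linarith
    rw [hf, map_sub, Pi.sub_apply, charSum_two_smul_sub, charSum_one, hD.sum_indicator,
      charSum_const_one hβ', if_pos rfl]
    exact_mod_cast hsum
  · rw [hf, map_sub, Pi.sub_apply, charSum_const_one hβ', if_neg hh, sub_zero,
      hD.charSum_two_smul_sub_sq hβ' hh, hΔ_eq, Int.cast_natCast]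

end IsRegularPartialDifferenceSet

end NonsquareDiscriminant

section Galois

variable {G E : Type*} [CommGroup G]

lemma cosetSum_pow {K : Subgroup G} [Fintype K] {s : ℕ} (hs : (Nat.card G).Coprime s) (f : G → ℤ)
    (z : G) : cosetSum K f (z ^ s) = cosetSum K (fun g ↦ f (g ^ s)) z := by
  have hsK := Nat.Coprime.of_dvd_left (Subgroup.card_subgroup_dvd_card K) hs
  refine (Fintype.sum_equiv (powCoprime hsK) _ _ fun x ↦ ?_).symm
  simp only [powCoprime_apply, mul_pow, SubmonoidClass.coe_pow]

variable [Field E] {β : G →* G →* E}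

section

variable [Finite G] [NumberField E] [IsCyclotomicExtension {Nat.card G} ℚ E]

open IsCyclotomicExtension.Rat

lemma exists_algEquiv_bichar_eq_pow {s : ℕ} (hs : (Nat.card G).Coprime s) :
    ∃ σ : E ≃ₐ[ℚ] E, ∀ x y, σ (β x y) = β x y ^ s := by
  refine ⟨(galEquivZMod (Nat.card G) E).symm (ZMod.unitOfCoprime s hs.symm), fun x y ↦ ?_⟩
  have hxy := bichar_pow_eq_one_of_pow_eq_one β (pow_card_eq_one' (x := x)) y
  rw [galEquivZMod_apply_of_pow_eq _ _ _ hxy, MulEquiv.apply_symm_apply, ZMod.coe_unitOfCoprime,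
    ZMod.val_natCast, ← pow_eq_pow_mod _ hxy]

lemma exists_coprime_bichar_eq_pow (σ : E ≃ₐ[ℚ] E) :
    ∃ s, (Nat.card G).Coprime s ∧ ∀ x y, σ (β x y) = β x y ^ s :=
  ⟨_, (ZMod.val_coe_unit_coprime (galEquivZMod (Nat.card G) E σ)).symm, fun _ y ↦
    galEquivZMod_apply_of_pow_eq _ _ _ (bichar_pow_eq_one_of_pow_eq_one β pow_card_eq_one' y)⟩

end

variable [Fintype G]

lemma charSum_comp_pow {s : ℕ} (hs : (Nat.card G).Coprime s) (f : G → ℤ) (h : G) :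
    charSum β (fun g ↦ f (g ^ s)) (h ^ s) = charSum β f h := by
  refine Fintype.sum_equiv (powCoprime hs) _ _ fun g ↦ ?_
  rw [powCoprime_apply, map_pow, map_pow, MonoidHom.pow_apply]

lemma map_charSum {F : Type*} [FunLike F E E] [RingHomClass F E E] {σ : F} {s : ℕ}
    (hσ : ∀ x y, σ (β x y) = β x y ^ s) (f : G → ℤ) (h : G) :
    σ (charSum β f h) = charSum β f (h ^ s) := by
  simp only [charSum_apply, map_sum, map_mul, map_intCast, hσ, map_pow]

variable [NumberField E] [IsCyclotomicExtension {Nat.card G} ℚ E]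

lemma charSum_mem_range_of_forall_map_pow {f : G → ℤ}
    (hf : ∀ s, (Nat.card G).Coprime s → ∀ g, f (g ^ s) = f g) (h : G) :
    ∃ r : ℚ, charSum β f h = r := by
  have := IsCyclotomicExtension.isGalois {Nat.card G} ℚ E
  suffices charSum β f h ∈ (⊥ : IntermediateField ℚ E) by
    obtain ⟨r, hr⟩ := IntermediateField.mem_bot.1 this
    exact ⟨r, hr.symm⟩
  refine (IsGalois.mem_bot_iff_fixed _).2 fun σ ↦ ?_
  obtain ⟨s, hs, hσ⟩ := exists_coprime_bichar_eq_pow (β := β) σ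
  have hfs : f = fun g ↦ f (g ^ s) := funext fun g ↦ (hf s hs g).symm
  rw [map_charSum hσ]
  nth_rw 1 [hfs]
  exact charSum_comp_pow hs f h

namespace IsPaleyFunction

variable {f : G → ℤ} (hf : IsPaleyFunction β f)
include hf

lemma exists_map_pow_eq_mul (hβ : Function.Injective β) {s : ℕ} (hs : (Nat.card G).Coprime s) :
    ∃ ε : ℤ, (ε = 1 ∨ ε = -1) ∧ ∀ g, f (g ^ s) = ε * f g := by
  obtain ⟨σ, hσ⟩ := exists_algEquiv_bichar_eq_pow (β := β) hs
  have := hf.nontrivial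
  obtain ⟨h₀, hh₀⟩ := exists_ne (1 : G)
  obtain ⟨ε, hε, hε₀⟩ : ∃ ε : ℤ, (ε = 1 ∨ ε = -1) ∧ σ (charSum β f h₀) = ε * charSum β f h₀ := by
    have hsq : σ (charSum β f h₀) ^ 2 = charSum β f h₀ ^ 2 := by
      rw [← map_pow, hf.charSum_sq hh₀, map_natCast]
    rcases sq_eq_sq_iff_eq_or_eq_neg.1 hsq with h | h
    · exact ⟨1, .inl rfl, by rw [h, Int.cast_one, one_mul]⟩
    · exact ⟨-1, .inr rfl, by rw [h, Int.cast_neg, Int.cast_one, neg_one_mul]⟩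
  have hε_pow (h : G) : charSum β f (h ^ s) = ε * charSum β f h := by
    rw [← map_charSum hσ]
    rcases eq_or_ne h 1 with rfl | hh
    · rw [hf.charSum_one, map_zero, mul_zero]
    · rcases sq_eq_sq_iff_eq_or_eq_neg.1 ((hf.charSum_sq hh).trans (hf.charSum_sq hh₀).symm) with
        h | h <;> rw [h]
      · exact hε₀
      · rw [map_neg, hε₀, mul_neg]
  have hε_sq : (ε * ε : E) = 1 := by rcases hε with rfl | rfl <;> norm_num
  refine ⟨ε, hε, congrFun (charSum_injective β hβ ?_)⟩
  ext h
  obtain ⟨h, rfl⟩ := (powCoprime hs).surjective h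
  have hsmul : (fun g ↦ ε * f g) = ε • f := rfl
  rw [powCoprime_apply, charSum_comp_pow hs, hsmul, map_zsmul, Pi.smul_apply, hε_pow,
    zsmul_eq_mul, ← mul_assoc, hε_sq, one_mul]

lemma exists_map_pow_eq_neg (hβ : Function.Injective β) :
    ∃ s, (Nat.card G).Coprime s ∧ ∀ g, f (g ^ s) = -f g := by
  by_contra! hne
  have hfix (s : ℕ) (hs : (Nat.card G).Coprime s) (g : G) : f (g ^ s) = f g := by
    obtain ⟨ε, rfl | rfl, hε⟩ := hf.exists_map_pow_eq_mul hβ hs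
    · rw [hε, one_mul]
    · obtain ⟨g, hg⟩ := hne s hs
      exact absurd (by rw [hε, neg_one_mul]) hg
  have := hf.nontrivial
  obtain ⟨h₀, hh₀⟩ := exists_ne (1 : G)
  obtain ⟨r, hr⟩ := charSum_mem_range_of_forall_map_pow (β := β) hfix h₀
  have hsq := hf.charSum_sq hh₀
  rw [hr] at hsq
  have hsq : r ^ 2 = ((Fintype.card G : ℤ) : ℚ) := by exact_mod_cast hsq
  exact hf.not_isSquare_card (Rat.isSquare_intCast_iff.1 ⟨r, by rw [← hsq, sq]⟩)

lemma map_pow_of_pow_eq_self (hβ : Function.Injective β) {s : ℕ} (hs : (Nat.card G).Coprime s)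
    {x : G} (hx : x ≠ 1) (hsx : x ^ s = x) (g : G) : f (g ^ s) = f g := by
  obtain ⟨ε, -, hε⟩ := hf.exists_map_pow_eq_mul hβ hs
  have hεx : ε * f x = 1 * f x := by rw [← hε, hsx, one_mul]
  rw [hε, mul_right_cancel₀ (hf.ne_zero hx) hεx, one_mul]

lemma eq_one_or_eq_one_of_coprime (hβ : Function.Injective β) {m n : ℕ} (hmn : m.Coprime n)
    (hcard : Nat.card G = m * n) {x y : G} (hx : x ^ m = 1) (hy : y ^ n = 1) : x = 1 ∨ y = 1 := by
  by_contra! hxy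
  obtain ⟨s, hs, hneg⟩ := hf.exists_map_pow_eq_neg hβ
  obtain ⟨t, htm, htn⟩ := Nat.chineseRemainder hmn s 1
  have ht : (Nat.card G).Coprime t := by
    rw [hcard] at hs ⊢
    refine Nat.Coprime.mul_left ?_ ?_
    · exact Nat.Coprime.symm (htm.gcd_eq.trans hs.coprime_mul_right.symm)
    · exact Nat.Coprime.symm (htn.gcd_eq.trans (Nat.gcd_one_left n))
  have htx : x ^ t = x ^ s := by rw [pow_eq_pow_mod t hx, htm, ← pow_eq_pow_mod s hx]
  have hty : y ^ t = y := by rw [pow_eq_pow_mod t hy, htn, ← pow_eq_pow_mod 1 hy, pow_one]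
  have hfx := hf.map_pow_of_pow_eq_self hβ ht hxy.2 hty x
  rw [htx, hneg] at hfx
  exact hf.ne_zero hxy.1 (by linarith)

lemma isPGroup (hβ : Function.Injective β) {p : ℕ} [hp : Fact p.Prime] {q : G} (hq : q ≠ 1)
    (hqp : q ^ p = 1) : IsPGroup p G := by
  obtain ⟨n, m, hpm, hcard⟩ := Nat.exists_eq_pow_mul_and_not_dvd (n := Nat.card G)
    Nat.card_pos.ne' p hp.out.ne_one
  have hcop : p.Coprime m := (Nat.Prime.coprime_iff_not_dvd hp.out).2 hpm
  have hn : n ≠ 0 := by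
    rintro rfl
    have hqm : q ^ m = 1 := by rw [← one_mul m, ← pow_zero p, ← hcard, pow_card_eq_one']
    exact hq (by simpa [hcop] using pow_gcd_eq_one.2 ⟨hqp, hqm⟩)
  refine fun y ↦ ⟨n, (hf.eq_one_or_eq_one_of_coprime hβ (hcop.pow_left n) hcard (x := q) ?_
    ?_).resolve_left hq⟩
  · obtain ⟨d, hd⟩ := dvd_pow_self p hn
    rw [hd, pow_mul, hqp, one_pow]
  · rw [← pow_mul, ← hcard, pow_card_eq_one']

end IsPaleyFunction

end Galois

section GaussSum

lemma coprime_card_of_isPGroup {p : ℕ} [Fact p.Prime] {G : Type*} [Group G] [Finite G]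
    (hG : IsPGroup p G) {s : ℕ} (hs : p.Coprime s) : (Nat.card G).Coprime s := by
  obtain ⟨n, hn⟩ := hG.exists_card_eq
  exact hn ▸ hs.pow_left n

lemma eq_of_card_sq_le_sum_sq {ι : Type*} [Fintype ι] {f : ι → ℤ} (hf : ∀ i, f i ^ 2 ≤ 1)
    (h : (Fintype.card ι : ℤ) ^ 2 ≤ (∑ i, f i) ^ 2) (i j : ι) : f i = f j := by
  have hsum : ∑ x : ι × ι, (f x.1 - f x.2) ^ 2 ≤ 0 := by
    calc ∑ x : ι × ι, (f x.1 - f x.2) ^ 2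
        ≤ ∑ x : ι × ι, (2 - 2 * (f x.1 * f x.2)) :=
          Finset.sum_le_sum fun x _ ↦ by linarith [hf x.1, hf x.2, sub_sq (f x.1) (f x.2)]
      _ = 2 * ((Fintype.card ι : ℤ) ^ 2 - (∑ i, f i) ^ 2) := by
          rw [Finset.sum_sub_distrib, ← Finset.mul_sum, Fintype.sum_prod_type' fun i j ↦ f i * f j,
            ← Fintype.sum_mul_sum]
          simp only [Finset.sum_const, Finset.card_univ, Fintype.card_prod, nsmul_eq_mul]
          push_cast
          ring
      _ ≤ 0 := by linarith
  have hle := Finset.single_le_sum (f := fun x : ι × ι ↦ (f x.1 - f x.2) ^ 2)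
    (fun _ _ ↦ sq_nonneg _) (Finset.mem_univ (i, j))
  exact sub_eq_zero.1 (sq_nonpos_iff _ |>.1 (hle.trans hsum))

lemma sum_range_mulChar_mul_pow {p : ℕ} [Fact p.Prime] {E : Type*} [Field E]
    (χ : MulChar (ZMod p) ℤ) {ζ : E} (hζ : ζ ^ p = 1) :
    ∑ j ∈ Finset.range p, (χ j : E) * ζ ^ j =
      gaussSum (χ.ringHomComp (Int.castRingHom E)) (AddChar.zmodChar p hζ) := by
  rw [gaussSum]
  refine Finset.sum_nbij' (fun j ↦ (j : ZMod p)) ZMod.val (by simp) (by simp [ZMod.val_lt])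
    (fun j hj ↦ ZMod.val_cast_of_lt (Finset.mem_range.1 hj)) (by simp) fun j _ ↦ ?_
  rw [AddChar.zmodChar_apply', MulChar.ringHomComp_apply, eq_intCast]

variable {G E : Type*} [CommGroup G] [Fintype G] [Field E] [NumberField E]
  [IsCyclotomicExtension {Nat.card G} ℚ E] {β : G →* G →* E} {f : G → ℤ} {p : ℕ}
  [hp : Fact p.Prime] {q : G}

namespace IsPaleyFunction

variable (hf : IsPaleyFunction β f) (hβ : Function.Injective β) (hG : IsPGroup p G)
include hf hβ hG

lemma charSum_eq_sum_range_cosetSum (hqp : q ^ p = 1) {h : G} (hh : β q h ≠ 1) {K : Subgroup G}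
    [Fintype K] (hK : ∀ x, x ∈ K ↔ β x h = 1) :
    charSum β f h = ∑ j ∈ Finset.range p, (cosetSum K f (q ^ j) : E) * β q h ^ j := by
  classical
  let H := Subgroup.zpowers (h ^ p)
  have hq : q ≠ 1 := by rintro rfl; simp at hh
  have hH (y : H) : charSum β f (h * y) = charSum β f h := by
    obtain ⟨j, hj⟩ := mem_powers_iff_mem_zpowers.2 y.2
    have hqs : q ^ (1 + p * j) = q := by rw [pow_add, pow_mul, hqp, one_pow, mul_one, pow_one]
    have hs : (Nat.card G).Coprime (1 + p * j) := coprime_card_of_isPGroup hG (by simp)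
    have hhs : h * y = h ^ (1 + p * j) := by rw [← hj, pow_add, pow_one, pow_mul]
    rw [hhs, ← charSum_comp_pow hs f h]
    simp only [hf.map_pow_of_pow_eq_self hβ hs hq hqs]
  have hmem (x : G) : x ∈ annihilator β H ↔ β x h ^ p = 1 := by
    rw [mem_annihilator_zpowers, map_pow]
  have hβqp := bichar_pow_eq_one_of_pow_eq_one β hqp h
  have hsum := sum_subgroup_charSum β H f h
  simp only [hH, Finset.sum_const, Finset.card_univ, nsmul_eq_mul] at hsum
  rw [mul_left_cancel₀ (Nat.cast_ne_zero.2 Fintype.card_ne_zero) hsum]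
  refine sum_mul_eq_sum_range_cosetSum (χ := β.flip h) (fun x ↦ ?_) ((hmem q).2 hβqp)
    (isPrimitiveRoot_bichar_of_pow_eq_one (β := β) hqp hh) hp.out.pos
    (fun x hx ↦ (hmem x).1 hx) f
  rw [hK, hmem]
  exact ⟨fun hx ↦ ⟨by rw [hx, one_pow], hx⟩, fun hx ↦ hx.2⟩

omit hG in
lemma map_pow_eq_mul (hq : q ≠ 1) {s : ℕ} (hs : (Nat.card G).Coprime s) (g : G) :
    f (g ^ s) = f (q ^ s) * f q * f g := by
  obtain ⟨ε, -, hε⟩ := hf.exists_map_pow_eq_mul hβ hs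
  rw [hε, hε]
  linear_combination -ε * f g * hf.sq_eq_one hq

lemma exists_mulChar (hq : q ≠ 1) (hqp : q ^ p = 1) :
    ∃ χ : MulChar (ZMod p) ℤ, χ ≠ 1 ∧ χ.IsQuadratic ∧
      ∀ s : ℕ, p.Coprime s → ∀ g, f (g ^ s) = χ s * f g := by
  have hpow_val (n : ℕ) : q ^ (n : ZMod p).val = q ^ n := by
    rw [ZMod.val_natCast, ← pow_eq_pow_mod n hqp]
  let χ : MulChar (ZMod p) ℤ :=
    { toFun := fun i ↦ f (q ^ i.val) * f q
      map_one' := by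
        rw [← Nat.cast_one, hpow_val, pow_one, ← sq, hf.sq_eq_one hq]
      map_mul' := fun i j ↦ by
        rcases eq_or_ne j 0 with rfl | hj
        · simp [hf.map_one]
        have hs : p.Coprime j.val := ((ZMod.val_coe_unit_coprime (Units.mk0 j hj))).symm
        rw [ZMod.val_mul, ← pow_eq_pow_mod _ hqp, pow_mul,
          hf.map_pow_eq_mul hβ hq (coprime_card_of_isPGroup hG hs)]
        ring
      map_nonunit' := fun i hi ↦ by
        obtain rfl : i = 0 := by simpa [isUnit_iff_ne_zero] using hi
        simp [hf.map_one] }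
  have hχ (s : ℕ) : χ s = f (q ^ s) * f q := by rw [← hpow_val]; rfl
  refine ⟨χ, fun h ↦ ?_, fun i ↦ ?_, fun s hs g ↦ ?_⟩
  · obtain ⟨s, -, hneg⟩ := hf.exists_map_pow_eq_neg hβ
    have hχs : χ s = -1 := by rw [hχ, hneg]; linarith [hf.sq_eq_one hq]
    rw [h] at hχs
    by_cases hs : IsUnit (s : ZMod p)
    · rw [MulChar.one_apply hs] at hχs
      norm_num at hχs
    · rw [MulChar.map_nonunit _ hs] at hχs
      norm_num at hχs
  · rw [← ZMod.natCast_zmod_val i, hχ]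
    rcases eq_or_ne (q ^ i.val) 1 with hi | hi
    · simp [hi, hf.map_one]
    · rcases hf.eq_or_eq_neg hi with h | h <;> rcases hf.eq_or_eq_neg hq with h' | h' <;>
        simp [h, h']
  · rw [hχ, ← hf.map_pow_eq_mul hβ hq (coprime_card_of_isPGroup hG hs)]

lemma cosetSum_sq_mul_eq_card (hqp : q ^ p = 1) {h : G} (hh : β q h ≠ 1) {K : Subgroup G}
    [Fintype K] (hK : ∀ x, x ∈ K ↔ β x h = 1) :
    cosetSum K f q ^ 2 * p = Fintype.card G := by
  have hq : q ≠ 1 := by rintro rfl; simp at hh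
  have hh₁ : h ≠ 1 := by rintro rfl; simp at hh
  obtain ⟨χ, hχ₁, hχ₂, hχ⟩ := hf.exists_mulChar hβ hG hq hqp
  have hβqp := bichar_pow_eq_one_of_pow_eq_one β hqp h
  have hβq : IsPrimitiveRoot (β q h) p := isPrimitiveRoot_bichar_of_pow_eq_one hqp hh
  have hcoset_one : cosetSum K f 1 = 0 := by
    obtain ⟨s, hs, hneg⟩ := hf.exists_map_pow_eq_neg hβ
    have := cosetSum_pow (K := K) hs f 1
    simp only [one_pow, hneg, cosetSum_apply, Finset.sum_neg_distrib] at this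
    exact self_eq_neg.1 this
  have hcoset (j : ℕ) : cosetSum K f (q ^ j) = χ j * cosetSum K f q := by
    by_cases hj : p ∣ j
    · obtain ⟨c, rfl⟩ := hj
      rw [pow_mul, hqp, one_pow, hcoset_one]
      simp [MulChar.map_zero]
    · have hj : p.Coprime j := hp.out.coprime_iff_not_dvd.2 hj
      rw [cosetSum_pow (coprime_card_of_isPGroup hG hj), cosetSum_apply, cosetSum_apply,
        Finset.mul_sum]
      simp only [hχ j hj]
  have hsum : charSum β f h = cosetSum K f q *
      gaussSum (χ.ringHomComp (Int.castRingHom E)) (AddChar.zmodChar p hβqp) := by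
    rw [hf.charSum_eq_sum_range_cosetSum hβ hG hqp hh hK, ← sum_range_mulChar_mul_pow,
      Finset.mul_sum]
    exact Finset.sum_congr rfl fun j _ ↦ by rw [hcoset]; push_cast; ring
  have hsq : cosetSum K f q ^ 2 * (χ (-1) * p) = Fintype.card G := by
    have := hf.charSum_sq hh₁
    rw [hsum, mul_pow, gaussSum_sq ((MulChar.ringHomComp_ne_one_iff
      (RingHom.injective_int _)).2 hχ₁) (hχ₂.comp _)
      (AddChar.zmodChar_primitive_of_primitive_root p hβq), ZMod.card,
      MulChar.ringHomComp_apply, eq_intCast] at this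
    exact_mod_cast this
  have hpos : (0 : ℤ) < Fintype.card G := mod_cast Fintype.card_pos
  rcases hχ₂ (-1) with hχ | hχ | hχ <;> rw [hχ] at hsq
  · linarith
  · rw [← hsq, one_mul]
  · nlinarith [mul_nonneg (sq_nonneg (cosetSum K f q)) (Nat.cast_nonneg (α := ℤ) p)]

lemma map_mul_of_bichar_eq_one {P : Sylow p G} {a b : ℕ} (hexp : ∀ x ∈ P, x ^ p ^ (a + 1) = 1)
    (hcard : Nat.card P = p ^ (a + 1 + b)) (hab : b ≤ a) {w h : G} (hh : β (w ^ p ^ a) h ≠ 1)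
    {x : G} (hx : β x h = 1) : f (w ^ p ^ a * x) = f (w ^ p ^ a) := by
  classical
  let K : Subgroup G := (β.flip h).ker
  have hP (y : G) : y ∈ P := (hG.to_subgroup ⊤).le_sylow_of_normal P (Subgroup.mem_top y)
  have hw : (w ^ p ^ a) ^ p = 1 := by rw [← pow_mul, ← pow_succ, hexp w (hP w)]
  have hS := hf.cosetSum_sq_mul_eq_card hβ hG hw hh (K := K) fun _ ↦ Iff.rfl
  have hK : Fintype.card K = p ^ b :=
    card_eq_pow_of_pow_ne_one (hP w) hexp hcard hh fun y ↦ (and_iff_right (hP y)).symm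
  have hG_card : Fintype.card G = p ^ (a + 1 + b) := by
    rw [← hcard, ← Nat.card_eq_fintype_card, ← Subgroup.card_top]
    exact congrArg (fun H : Subgroup G ↦ Nat.card H) ((Subgroup.eq_top_iff' _).2 hP).symm
  have hS_sq : (Fintype.card K : ℤ) ^ 2 ≤ cosetSum K f (w ^ p ^ a) ^ 2 := by
    have hp_pos : (0 : ℤ) < p := mod_cast hp.out.pos
    have hS_eq : cosetSum K f (w ^ p ^ a) ^ 2 = p ^ (a + b) := by
      rw [hG_card] at hS
      push_cast at hS
      exact mul_right_cancel₀ hp_pos.ne' (hS.trans (by ring))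
    rw [hS_eq, hK, Nat.cast_pow, ← pow_mul]
    exact pow_le_pow_right₀ hp_pos (by omega)
  have hf_sq (y : K) : f (w ^ p ^ a * y) ^ 2 ≤ 1 := by
    rcases eq_or_ne (w ^ p ^ a * y) 1 with hy | hy
    · simp [hy, hf.map_one]
    · exact (hf.sq_eq_one hy).le
  simpa using eq_of_card_sq_le_sum_sq hf_sq hS_sq ⟨x, hx⟩ 1

end IsPaleyFunction

theorem not_isPaleyFunction (hβ : Function.Injective β) {P : Sylow p G} {a b : ℕ} {w : G}
    (hw : w ∈ P) (hw_pow : w ^ p ^ a ≠ 1) (hexp : ∀ x ∈ P, x ^ p ^ (a + 1) = 1)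
    (hcard : Nat.card P = p ^ (a + 1 + b)) (hb : b ≠ 0) (hab : b ≤ a) : ¬ IsPaleyFunction β f := by
  classical
  intro hf
  obtain ⟨q, hq⟩ : ∃ q, q = w ^ p ^ a := ⟨_, rfl⟩
  rw [← hq] at hw_pow
  have hqp : q ^ p = 1 := by rw [hq, ← pow_mul, ← pow_succ, hexp w hw]
  have hG : IsPGroup p G := hf.isPGroup hβ hw_pow hqp
  have hP (y : G) : y ∈ P := (hG.to_subgroup ⊤).le_sylow_of_normal P (Subgroup.mem_top y)
  obtain ⟨h₁, hqh₁⟩ := exists_bichar_ne_one hβ hw_pow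
  obtain ⟨κ, hκ, hκp, hκh₁⟩ : ∃ κ ≠ 1, κ ^ p = 1 ∧ β κ h₁ = 1 := by
    refine exists_bichar_eq_one_of_dvd_card_ker ?_
    rw [Nat.card_eq_fintype_card, card_eq_pow_of_pow_ne_one hw hexp hcard (hq ▸ hqh₁) fun y ↦
      (and_iff_right (hP y)).symm]
    exact dvd_pow_self p hb
  obtain ⟨h₂, hκh₂, hqh₂⟩ := exists_bichar_ne_one_and_ne_one hβ hκh₁ hκ hqh₁
  obtain ⟨s, hs, hneg⟩ := hf.exists_map_pow_eq_neg hβ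
  obtain ⟨i, hi⟩ := exists_bichar_pow_eq hκp hκh₂ (y := q⁻¹ * q ^ s) <| by
    rw [mul_pow, pow_right_comm, inv_pow, hqp, one_pow, inv_one, one_mul]
  have hf₁ : f (q * κ ^ i) = f q := by
    rw [hq] at hqh₁ ⊢
    refine hf.map_mul_of_bichar_eq_one hβ hG hexp hcard hab hqh₁ ?_
    rw [map_pow, MonoidHom.pow_apply, hκh₁, one_pow]
  have hf₂ : f (q * κ ^ i) = f (q ^ s) := by
    have hqs : q ^ s = (w ^ s) ^ p ^ a := by rw [hq, pow_right_comm]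
    have hqsh₂ := bichar_pow_ne_one_of_coprime hs hqh₂
    rw [← mul_inv_cancel_left (q ^ s) (q * κ ^ i)]
    rw [hqs] at hqsh₂ ⊢
    refine hf.map_mul_of_bichar_eq_one hβ hG hexp hcard hab hqsh₂ ?_
    rw [← hqs, ← mul_assoc, map_mul, MonoidHom.mul_apply, hi, ← MonoidHom.mul_apply, ← map_mul,
      mul_assoc, mul_inv_cancel_left, inv_mul_cancel, map_one, MonoidHom.one_apply]
  have hf_neg : f q = -f q := by rw [← hneg, ← hf₂, hf₁]
  exact hf.ne_zero hw_pow (self_eq_neg.1 hf_neg)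

end GaussSum

/-! ### From partial difference sets to characters -/

section Reduction

lemma exists_bichar_injective (G E : Type*) [CommGroup G] [Finite G] [Field E]
    [HasEnoughRootsOfUnity E (Monoid.exponent G)] :
    ∃ β : G →* G →* E, Function.Injective β ∧ Function.Injective β.flip := by
  obtain ⟨φ⟩ := CommGroup.monoidHom_mulEquiv_of_hasEnoughRootsOfUnity G E
  let β : G →* G →* E := (MonoidHom.compHom (Units.coeHom E)).comp φ.symm.toMonoidHom
  have hβ (x y : G) : β x y = φ.symm x y := rfl
  refine ⟨β, (injective_iff_map_eq_one _).2 fun x hx ↦ ?_,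
    (injective_iff_map_eq_one _).2 fun y hy ↦ ?_⟩
  · refine (map_eq_one_iff φ.symm φ.symm.injective).1 (MonoidHom.ext fun y ↦ Units.ext ?_)
    rw [← hβ, hx]
    rfl
  · by_contra hy₁
    obtain ⟨ψ, hψ⟩ := CommGroup.exists_apply_ne_one_of_hasEnoughRootsOfUnity G E hy₁
    refine hψ (Units.ext ?_)
    rw [← φ.symm_apply_apply ψ, ← hβ, ← MonoidHom.flip_apply, hy]
    rfl

lemma sum_indicator_one_eq_ncard {G : Type*} [Fintype G] (A : Set G) :
    ∑ y, 𝟙[A] y = A.ncard := by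
  classical
  simp [Set.ncard_eq_toFinset_card', Set.indicator_apply, Set.toFinset, Finset.filter]

lemma sum_indicator_mul_eq_ncard {G : Type*} [Group G] [Fintype G] (D : Set G) {z : G}
    (hz : z ≠ 1) : ∑ y, 𝟙[D] y * 𝟙[D] (z * y) =
      {p : G × G | p.1 ∈ D ∧ p.2 ∈ D ∧ p.1 ≠ p.2 ∧ p.1 * p.2⁻¹ = z}.ncard := by
  have hpairs : {p : G × G | p.1 ∈ D ∧ p.2 ∈ D ∧ p.1 ≠ p.2 ∧ p.1 * p.2⁻¹ = z} =
      (fun y ↦ (z * y, y)) '' (D ∩ (z * ·) ⁻¹' D) := by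
    ext ⟨x, y⟩
    simp only [Set.mem_ofPred_eq, Set.mem_image, Set.mem_inter_iff, Set.mem_preimage, Prod.mk.injEq,
      mul_inv_eq_iff_eq_mul]
    constructor
    · rintro ⟨hx, hy, -, rfl⟩
      exact ⟨y, ⟨hy, hx⟩, rfl, rfl⟩
    · rintro ⟨y, ⟨hy, hx⟩, rfl, rfl⟩
      exact ⟨hx, hy, by simpa using hz, rfl⟩
  rw [hpairs, Set.ncard_image_of_injective _ fun _ _ h ↦ congrArg Prod.snd h,
    ← sum_indicator_one_eq_ncard]
  refine Finset.sum_congr rfl fun y _ ↦ ?_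
  by_cases hy : y ∈ D <;> by_cases hzy : z * y ∈ D <;> simp [hy, hzy]

lemma IsPDS.isRegularPartialDifferenceSet {G : Type*} [CommGroup G] [Fintype G] {D : Set G}
    {v k lam mu : ℕ} (hpds : IsPDS D v k lam mu) (hreg : IsRegularPDS D) :
    IsRegularPartialDifferenceSet D k lam mu where
  one_notMem := hreg.1
  inv_mem := hreg.2 _
  sum_indicator_mul z := by
    obtain ⟨-, hk, hlam, hmu⟩ := hpds
    rcases eq_or_ne z 1 with rfl | hz
    · simp only [one_mul, indicator_one_mul_self, sum_indicator_one_eq_ncard, hk,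
        Set.indicator_of_notMem hreg.1]
      simp
    · have hz' : z ∉ ({1} : Set G) := hz
      rw [sum_indicator_mul_eq_ncard D hz, Set.indicator_of_notMem hz']
      by_cases hzD : z ∈ D
      · rw [hlam z hz hzD, Set.indicator_of_mem hzD]; ring
      · rw [hmu z hz hzD, Set.indicator_of_notMem hzD]; ring

lemma isTrivialPDS_of_forall_notMem {G : Type*} [Group G] {D : Set G} (hD : ∀ g, g ∉ D) :
    IsTrivialPDS D :=
  .inl ⟨⊥, by simp [Set.eq_empty_of_forall_notMem hD]⟩

lemma isTrivialPDS_of_forall_notMem_imp_eq_one {G : Type*} [Group G] {D : Set G}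
    (hD : ∀ g, g ∉ D → g = 1) : IsTrivialPDS D :=
  .inl ⟨⊤, Set.eq_univ_of_forall fun g ↦ or_iff_not_imp_left.2 (hD g)⟩

variable {G : Type*} [CommGroup G] {p : ℕ} [Fact p.Prime]

lemma exists_mem_sylow_pow_ne_one [Finite G] (P : Sylow p G) (hcyc : ¬ IsCyclic P)
    (hexp : Nat.card P < Monoid.exponent P ^ 2) :
    ∃ a b, ∃ w ∈ P, w ^ p ^ a ≠ 1 ∧ (∀ x ∈ P, x ^ p ^ (a + 1) = 1) ∧
      Nat.card P = p ^ (a + 1 + b) ∧ b ≠ 0 ∧ b ≤ a := by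
  have hp : p.Prime := Fact.out
  obtain ⟨m, hm⟩ := IsPGroup.iff_card.1 P.2
  obtain ⟨n, hnm, hn⟩ := (Nat.dvd_prime_pow hp).1 (hm ▸ Group.exponent_dvd_nat_card (G := P))
  obtain ⟨w, hw⟩ := Monoid.exists_orderOf_eq_exponent (Monoid.ExponentExists.of_finite (G := P))
  rw [hm, hn, ← pow_mul, Nat.pow_lt_pow_iff_right hp.one_lt] at hexp
  obtain ⟨a, rfl⟩ : ∃ a, n = a + 1 := Nat.exists_eq_succ_of_ne_zero (by omega)
  obtain ⟨b, rfl⟩ := Nat.exists_eq_add_of_le hnm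
  refine ⟨a, b, w, w.2, fun h ↦ ?_, fun x hx ↦ ?_, hm, ?_, by omega⟩
  · have hdvd := orderOf_dvd_of_pow_eq_one (Subtype.ext h : w ^ p ^ a = 1)
    rw [hw, hn, Nat.pow_dvd_pow_iff_le_right hp.one_lt] at hdvd
    omega
  · exact hn ▸ congrArg Subtype.val (Monoid.pow_exponent_eq_one (⟨x, hx⟩ : P))
  · rintro rfl
    exact hcyc (IsCyclic.iff_exponent_eq_card.2 (hn.trans hm.symm))

end Reduction

section UnbalancedPrimaryGroup

variable {p a b : ℕ} {H : Type*} [CommGroup H]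

lemma exponent_eq_pow_max (e : H ≃* Multiplicative (ZMod (p ^ a) × ZMod (p ^ b))) :
    Monoid.exponent H = p ^ max a b := by
  rw [Monoid.exponent_eq_of_mulEquiv e, Monoid.exponent_multiplicative, AddMonoid.exponent_prod,
    ZMod.exponent, ZMod.exponent]
  change Nat.lcm _ _ = _
  rcases le_total a b with h | h
  · rw [max_eq_right h, Nat.lcm_eq_right (pow_dvd_pow p h)]
  · rw [max_eq_left h, Nat.lcm_eq_left (pow_dvd_pow p h)]

lemma card_eq_pow_add (e : H ≃* Multiplicative (ZMod (p ^ a) × ZMod (p ^ b))) :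
    Nat.card H = p ^ (a + b) := by
  rw [Nat.card_congr (e.toEquiv.trans Multiplicative.toAdd), Nat.card_prod, Nat.card_zmod,
    Nat.card_zmod, pow_add]

lemma not_isCyclic_of_mulEquiv (hp : 1 < p) (ha : 1 ≤ a) (hb : 1 ≤ b)
    (e : H ≃* Multiplicative (ZMod (p ^ a) × ZMod (p ^ b))) : ¬ IsCyclic H := by
  have : Finite H := Nat.finite_of_card_ne_zero (by
    rw [card_eq_pow_add e]; exact pow_ne_zero _ (by omega))
  rw [IsCyclic.iff_exponent_eq_card, exponent_eq_pow_max e, card_eq_pow_add e,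
    Nat.pow_right_inj hp]
  omega

lemma card_lt_exponent_sq_of_mulEquiv (hp : 1 < p) (hab : a ≠ b)
    (e : H ≃* Multiplicative (ZMod (p ^ a) × ZMod (p ^ b))) :
    Nat.card H < Monoid.exponent H ^ 2 := by
  rw [exponent_eq_pow_max e, card_eq_pow_add e, ← pow_mul, Nat.pow_lt_pow_iff_right hp]
  omega

end UnbalancedPrimaryGroup

theorem no_nontrivial_pds_of_unbalanced_sylow_general {G : Type*} [CommGroup G]
    [Finite G] {p : ℕ} [Fact p.Prime] (P : Sylow p G) (hcyc : ¬ IsCyclic P)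
    (hexp : Nat.card P < Monoid.exponent P ^ 2) {v k lam mu : ℕ} {D : Set G}
    (hpds : IsPDS D v k lam mu) (hreg : IsRegularPDS D) : IsTrivialPDS D := by
  have := Fintype.ofFinite G
  have : NeZero (Nat.card G : ℚ) := ⟨Nat.cast_ne_zero.2 Nat.card_pos.ne'⟩
  let E := CyclotomicField (Nat.card G) ℚ
  have : IsCyclotomicExtension {Nat.card G} ℚ E := CyclotomicField.isCyclotomicExtension _ ℚ
  have : HasEnoughRootsOfUnity E (Nat.card G) :=
    ⟨⟨_, IsCyclotomicExtension.zeta_spec (Nat.card G) ℚ E⟩, inferInstance⟩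
  have : HasEnoughRootsOfUnity E (Monoid.exponent G) := .of_dvd E Group.exponent_dvd_nat_card
  obtain ⟨β, hβ, hβ'⟩ := exists_bichar_injective G E
  obtain ⟨a, b, w, hw, hw_pow, hexp, hcard, hb, hab⟩ := exists_mem_sylow_pow_ne_one P hcyc hexp
  have hD := hpds.isRegularPartialDifferenceSet hreg
  by_contra hnontrivial
  obtain ⟨g₀, hg₀⟩ : ∃ g, g ∈ D := by
    by_contra! h
    exact hnontrivial (isTrivialPDS_of_forall_notMem h)
  obtain ⟨g₁, hg₁, hg₁_ne⟩ : ∃ g, g ∉ D ∧ g ≠ 1 := by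
    by_contra! h
    exact hnontrivial (isTrivialPDS_of_forall_notMem_imp_eq_one h)
  by_cases hΔ : IsSquare ((lam - mu : ℤ) ^ 2 + 4 * (k - mu))
  · exact hnontrivial
      (hD.isTrivialPDS_of_isSquare hβ hβ' hw hw_pow hexp hcard hab hΔ hg₀ hg₁ hg₁_ne)
  · exact not_isPaleyFunction hβ hw hw_pow hexp hcard hb hab
      (hD.isPaleyFunction hβ hβ' hΔ hg₀ hg₁ hg₁_ne)

/-- Ma: if the abelian group `G` of order `v` has, for some prime `p`, a
Sylow `p`-subgroup isomorphic to `ℤ_{p^a} × ℤ_{p^b}` with `a ≠ b` (`a, b ≥ 1`), then every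
regular partial difference set in `G` is trivial. -/
theorem no_nontrivial_pds_of_unbalanced_sylow
    (G : Type*) [CommGroup G] [Fintype G] (v : ℕ) (hv : Fintype.card G = v)
    (p : ℕ) (hp : p.Prime) (a b : ℕ) (ha : 1 ≤ a) (hb : 1 ≤ b) (hab : a ≠ b)
    (hsyl : ∀ P : Sylow p G,
      Nonempty (P ≃* Multiplicative (ZMod (p ^ a) × ZMod (p ^ b))))
    (k lam mu : ℕ) (D : Set G)
    (hpds : IsPDS D v k lam mu) (hreg : IsRegularPDS D) :
    IsTrivialPDS D := by
  have : Fact p.Prime := ⟨hp⟩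
  obtain ⟨P⟩ : Nonempty (Sylow p G) := inferInstance
  obtain ⟨e⟩ := hsyl P
  exact no_nontrivial_pds_of_unbalanced_sylow_general P (not_isCyclic_of_mulEquiv hp.one_lt ha hb e)
    (card_lt_exponent_sq_of_mulEquiv hp.one_lt hab e) hpds hreg
end
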